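/- arXiv:1905.08075 — 3 statements merged into one kernel-verified Lean document; each statement's English description precedes it below -/
import Mathlib

section
/- Let F be a polynomial in one variable with coefficients in ℕ. Then the image F(ℕ) := { F(x) : x ∈ ℕ } is small if and only if the degree of F is not equal to 1. -/
open Set Filter Topology

/-- An upper quasi-density on ℕ. -/
def IsUpperQuasiDensity (μ : Set ℕ → ℝ) : Prop :=
  μ Set.univ = 1 ∧
  (∀ X : Set ℕ, μ X ≤ 1) ∧
  (∀ X Y : Set ℕ, μ (X ∪ Y) ≤ μ X + μ Y) ∧
  (∀ (X : Set ℕ) (k : ℕ), 0 < k → μ ((fun x => k * x) '' X) = μ X / k) ∧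
  (∀ (X : Set ℕ) (h : ℕ), μ ((fun x => x + h) '' X) = μ X)

/-- An upper density on ℕ: a monotone upper quasi-density. -/
def IsUpperDensity (μ : Set ℕ → ℝ) : Prop :=
  IsUpperQuasiDensity μ ∧ ∀ X Y : Set ℕ, X ⊆ Y → μ X ≤ μ Y

/-- A set of naturals is small if every upper quasi-density vanishes on it. -/
def SmallSet (X : Set ℕ) : Prop :=
  ∀ μ : Set ℕ → ℝ, IsUpperQuasiDensity μ → μ X = 0

/-- The upper asymptotic density of a set of naturals. -/
noncomputable def upperAsymptoticDensity (X : Set ℕ) : ℝ :=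
  limsup (fun n : ℕ => ((X ∩ Set.Icc 1 n).ncard : ℝ) / n) atTop

/-- The arithmetic progression k·ℕ + h. -/
def AP (k h : ℕ) : Set ℕ := {x : ℕ | ∃ m : ℕ, x = k * m + h}

/-- A finite union of arithmetic progressions of ℕ. -/
def IsFinUnionAP (A : Set ℕ) : Prop :=
  ∃ s : Finset (ℕ × ℕ), (∀ p ∈ s, 0 < p.1) ∧ A = ⋃ p ∈ s, AP p.1 p.2

/-- The upper Buck density of a set of naturals. -/
noncomputable def buckDensity (X : Set ℕ) : ℝ :=
  sInf {d : ℝ | ∃ A : Set ℕ, IsFinUnionAP A ∧ X ⊆ A ∧ d = upperAsymptoticDensity A}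

/-- `rk k X` is the number of residues h ∈ [0, k-1] with X ∩ (k·ℕ + h) ≠ ∅. -/
noncomputable def rk (k : ℕ) (X : Set ℕ) : ℕ :=
  {h : ℕ | h < k ∧ (X ∩ AP k h).Nonempty}.ncard

/-- `wk μ k S` is the number of residues h ∈ [0, k-1] with μ(S ∩ (k·ℕ + h)) ≠ 0. -/
noncomputable def wk (μ : Set ℕ → ℝ) (k : ℕ) (S : Set ℕ) : ℕ :=
  {h : ℕ | h < k ∧ μ (S ∩ AP k h) ≠ 0}.ncard

/-!
For `X ⊆ ℕ` let `δ X` be the infimum over `k` of the proportion of residue classes mod `k` that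
meet `X`. Splitting `X` along these classes shows that every upper quasi-density is bounded above
by `δ`, and `δ` is itself an upper quasi-density; so `X` is small exactly when `δ X = 0`. The image
of a linear polynomial is an arithmetic progression, on which `δ` is positive, and `δ` vanishes on
finite sets. Let finally `F` have degree `d ≥ 2`. By the Chinese remainder theorem it is enough to
find arbitrarily large primes `p` modulo which `F` omits a fixed proportion of the residues. If `F`
is not injective mod `p` it omits at least `(p - 1) / (2 * d)` of them, by a power-sum argument in
the spirit of Wan's bound on value sets; and this happens for each prime divisor `p` of a value of
the non-constant polynomial `F(X + 1) - F(X)`.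
-/

section ResidueCount

variable {k m : ℕ} {X : Set ℕ}

lemma mem_AP_iff_mod_eq {h x : ℕ} (hh : h < k) : x ∈ AP k h ↔ x % k = h := by
  constructor
  · rintro ⟨y, rfl⟩
    rw [Nat.mul_add_mod, Nat.mod_eq_of_lt hh]
  · rintro rfl
    exact ⟨x / k, (Nat.div_add_mod x k).symm⟩

lemma rk_le_self (k : ℕ) (X : Set ℕ) : rk k X ≤ k :=
  calc rk k X ≤ (Set.Iio k).ncard :=
        Set.ncard_le_ncard (fun _ hh => hh.1) (Set.finite_Iio k)
    _ = k := Set.ncard_Iio_nat k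

lemma rk_univ (k : ℕ) : rk k Set.univ = k := by
  have hall : {h : ℕ | h < k ∧ (Set.univ ∩ AP k h).Nonempty} = Set.Iio k :=
    Set.Subset.antisymm (fun _ hh => hh.1) fun h hh => ⟨hh, h, trivial, 0, by simp⟩
  rw [rk, hall, Set.ncard_Iio_nat]

lemma rk_union_le (k : ℕ) (X Y : Set ℕ) : rk k (X ∪ Y) ≤ rk k X + rk k Y := by
  have hsplit : {h : ℕ | h < k ∧ ((X ∪ Y) ∩ AP k h).Nonempty} =
      {h | h < k ∧ (X ∩ AP k h).Nonempty} ∪ {h | h < k ∧ (Y ∩ AP k h).Nonempty} := by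
    ext h
    simp only [Set.union_inter_distrib_right, Set.union_nonempty, and_or_left, Set.mem_union,
      Set.mem_ofPred_eq]
  rw [rk, hsplit]
  exact Set.ncard_union_le _ _

lemma rk_eq_ncard_image_mod (hk : 0 < k) (X : Set ℕ) : rk k X = ((· % k) '' X).ncard := by
  rw [rk]
  congr 1
  ext h
  constructor
  · rintro ⟨hh, x, hx, hxh⟩
    exact ⟨x, hx, (mem_AP_iff_mod_eq hh).1 hxh⟩
  · rintro ⟨x, hx, rfl⟩
    have hlt := Nat.mod_lt x hk
    exact ⟨hlt, x, hx, (mem_AP_iff_mod_eq hlt).2 rfl⟩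

lemma finite_image_mod (hk : 0 < k) (X : Set ℕ) : ((· % k) '' X).Finite :=
  (Set.finite_Iio k).subset <| Set.image_subset_iff.2 fun x _ => Nat.mod_lt x hk

lemma rk_le_ncard (hk : 0 < k) (hX : X.Finite) : rk k X ≤ X.ncard := by
  rw [rk_eq_ncard_image_mod hk]
  exact Set.ncard_image_le hX

lemma rk_image_add (hk : 0 < k) (X : Set ℕ) (h : ℕ) : rk k ((· + h) '' X) = rk k X := by
  have hinj : Set.InjOn (fun r => (r + h) % k) ((· % k) '' X) := by
    rintro _ ⟨x, -, rfl⟩ _ ⟨y, -, rfl⟩ hxy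
    simpa only [Nat.ModEq, Nat.mod_mod] using Nat.ModEq.add_right_cancel' h hxy
  rw [rk_eq_ncard_image_mod hk, rk_eq_ncard_image_mod hk, ← hinj.ncard_image]
  simp only [Set.image_image, Nat.mod_add_mod]

lemma rk_mul_image_mul (hk : 0 < k) (hm : 0 < m) (X : Set ℕ) :
    rk (k * m) ((k * ·) '' X) = rk m X := by
  rw [rk_eq_ncard_image_mod (Nat.mul_pos hk hm), rk_eq_ncard_image_mod hm,
    ← Set.ncard_image_of_injective ((· % m) '' X) (mul_right_injective₀ hk.ne')]
  simp only [Set.image_image, Nat.mul_mod_mul_left]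

lemma rk_mul_le (hk : 0 < k) (hm : 0 < m) (X : Set ℕ) : rk (k * m) X ≤ k * rk m X := by
  have hdigits : (· % (k * m)) '' X ⊆
      (fun q : ℕ × ℕ => q.2 + m * q.1) '' (Set.Iio k ×ˢ ((· % m) '' X)) := by
    rintro _ ⟨x, hx, rfl⟩
    refine ⟨(x / m % k, x % m), ⟨Nat.mod_lt _ hk, x, hx, rfl⟩, ?_⟩
    simp only [Nat.mul_comm k m, Nat.mod_mul]
  have hfin : (Set.Iio k ×ˢ ((· % m) '' X)).Finite :=
    (Set.finite_Iio k).prod (finite_image_mod hm X)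
  calc rk (k * m) X = ((· % (k * m)) '' X).ncard :=
        rk_eq_ncard_image_mod (Nat.mul_pos hk hm) X
    _ ≤ (Set.Iio k ×ˢ ((· % m) '' X)).ncard :=
        (Set.ncard_le_ncard hdigits (hfin.image _)).trans (Set.ncard_image_le hfin)
    _ = k * rk m X := by rw [Set.ncard_prod, Set.ncard_Iio_nat, rk_eq_ncard_image_mod hm]

lemma rk_mul_le_of_coprime (hk : 0 < k) (hm : 0 < m) (hkm : k.Coprime m) (X : Set ℕ) :
    rk (k * m) X ≤ rk k X * rk m X := by
  rw [rk_eq_ncard_image_mod (Nat.mul_pos hk hm), rk_eq_ncard_image_mod hk,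
    rk_eq_ncard_image_mod hm, ← Set.ncard_prod]
  refine Set.ncard_le_ncard_of_injOn (fun x => (x % k, x % m)) ?_ ?_
    ((finite_image_mod hk X).prod (finite_image_mod hm X))
  · rintro _ ⟨x, hx, rfl⟩
    exact ⟨⟨x, hx, (Nat.mod_mul_right_mod x k m).symm⟩, ⟨x, hx, (Nat.mod_mul_left_mod x k m).symm⟩⟩
  · rintro _ ⟨x, -, rfl⟩ _ ⟨y, -, rfl⟩ hxy
    simp only [Nat.mod_mul_right_mod, Nat.mod_mul_left_mod, Prod.mk.injEq] at hxy
    exact (Nat.modEq_and_modEq_iff_modEq_mul hkm).1 hxy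

lemma rk_mul_div_le (hk : 0 < k) (hm : 0 < m) (X : Set ℕ) :
    (rk (k * m) X : ℝ) / (k * m : ℕ) ≤ rk m X / m := by
  have hle : (rk (k * m) X : ℝ) ≤ k * rk m X := mod_cast rk_mul_le hk hm X
  have hk' : (k : ℝ) ≠ 0 := mod_cast hk.ne'
  calc (rk (k * m) X : ℝ) / (k * m : ℕ) ≤ k * rk m X / (k * m : ℕ) := by gcongr
    _ = rk m X / m := by rw [Nat.cast_mul, mul_div_mul_left _ _ hk']

end ResidueCount

namespace IsUpperQuasiDensity

variable {μ : Set ℕ → ℝ} {k : ℕ}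

lemma apply_le_one (hμ : IsUpperQuasiDensity μ) (X : Set ℕ) : μ X ≤ 1 := hμ.2.1 X

lemma apply_union_le (hμ : IsUpperQuasiDensity μ) (X Y : Set ℕ) : μ (X ∪ Y) ≤ μ X + μ Y :=
  hμ.2.2.1 X Y

lemma apply_image_affine (hμ : IsUpperQuasiDensity μ) (hk : 0 < k) (h : ℕ) (X : Set ℕ) :
    μ ((fun x => k * x + h) '' X) = μ X / k := by
  obtain ⟨-, -, -, hmul, hadd⟩ := hμ
  rw [← hmul X k hk, ← hadd ((k * ·) '' X) h, Set.image_image]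

lemma apply_nonneg (hμ : IsUpperQuasiDensity μ) (X : Set ℕ) : 0 ≤ μ X := by
  have hself := hμ.apply_union_le X X
  rw [Set.union_self] at hself
  linarith

lemma apply_empty (hμ : IsUpperQuasiDensity μ) : μ ∅ = 0 := by
  have hhalf := hμ.apply_image_affine two_pos 0 ∅
  rw [Set.image_empty, Nat.cast_ofNat] at hhalf
  linarith

lemma apply_biUnion_le {ι : Type*} (hμ : IsUpperQuasiDensity μ) (s : Finset ι) (X : ι → Set ℕ) :
    μ (⋃ i ∈ s, X i) ≤ ∑ i ∈ s, μ (X i) := by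
  classical
  induction s using Finset.induction_on with
  | empty => simp [hμ.apply_empty]
  | insert i s hi ih =>
    rw [Finset.set_biUnion_insert, Finset.sum_insert hi]
    exact (hμ.apply_union_le _ _).trans (by gcongr)

lemma apply_inter_AP_le (hμ : IsUpperQuasiDensity μ) (hk : 0 < k) (h : ℕ) (X : Set ℕ) :
    μ (X ∩ AP k h) ≤ 1 / k := by
  have himage : X ∩ AP k h = (fun y => k * y + h) '' {y | k * y + h ∈ X} := by
    ext x
    constructor
    · rintro ⟨hx, y, rfl⟩
      exact ⟨y, hx, rfl⟩
    · rintro ⟨y, hy, rfl⟩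
      exact ⟨hy, y, rfl⟩
  rw [himage, hμ.apply_image_affine hk]
  gcongr
  exact hμ.apply_le_one _

lemma apply_le_rk_div (hμ : IsUpperQuasiDensity μ) (hk : 0 < k) (X : Set ℕ) :
    μ X ≤ rk k X / k := by
  have hfin : {h : ℕ | h < k ∧ (X ∩ AP k h).Nonempty}.Finite :=
    (Set.finite_Iio k).subset fun _ hh => hh.1
  have hcover : X = ⋃ h ∈ hfin.toFinset, X ∩ AP k h := by
    refine Set.Subset.antisymm (fun x hx => ?_)
      (Set.iUnion₂_subset fun _ _ => Set.inter_subset_left)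
    have hlt := Nat.mod_lt x hk
    have hmem : x ∈ X ∩ AP k (x % k) := ⟨hx, (mem_AP_iff_mod_eq hlt).2 rfl⟩
    exact Set.mem_biUnion (hfin.mem_toFinset.2 ⟨hlt, x, hmem⟩) hmem
  calc μ X = μ (⋃ h ∈ hfin.toFinset, X ∩ AP k h) := congrArg μ hcover
    _ ≤ ∑ h ∈ hfin.toFinset, μ (X ∩ AP k h) := hμ.apply_biUnion_le _ _
    _ ≤ ∑ _h ∈ hfin.toFinset, (1 : ℝ) / k :=
        Finset.sum_le_sum fun h _ => hμ.apply_inter_AP_le hk h X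
    _ = rk k X / k := by
        rw [Finset.sum_const, nsmul_eq_mul, mul_one_div, rk, Set.ncard_eq_toFinset_card _ hfin]

end IsUpperQuasiDensity

/-- The residue density of `X`: the infimum over `k ≥ 1` of the proportion of residue classes mod
`k` that meet `X`. It is the residue-counting form of the upper Buck density, and it dominates
every upper quasi-density. -/
noncomputable def residueDensity (X : Set ℕ) : ℝ := ⨅ k : ℕ+, (rk k X : ℝ) / (k : ℕ)

section ResidueDensity

variable {k : ℕ} {X : Set ℕ}

lemma bddBelow_range_rk_div (X : Set ℕ) :
    BddBelow (Set.range fun k : ℕ+ => (rk k X : ℝ) / (k : ℕ)) :=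
  ⟨0, Set.forall_mem_range.2 fun _ => by positivity⟩

lemma residueDensity_le (hk : 0 < k) (X : Set ℕ) : residueDensity X ≤ rk k X / k :=
  ciInf_le (bddBelow_range_rk_div X) (⟨k, hk⟩ : ℕ+)

lemma residueDensity_nonneg (X : Set ℕ) : 0 ≤ residueDensity X :=
  Real.iInf_nonneg fun _ => by positivity

lemma residueDensity_univ : residueDensity Set.univ = 1 := by
  have hone (k : ℕ+) : (rk k Set.univ : ℝ) / (k : ℕ) = 1 := by
    rw [rk_univ, div_self (Nat.cast_ne_zero.2 k.ne_zero)]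
  simp only [residueDensity, hone, ciInf_const]

lemma residueDensity_union_le (X Y : Set ℕ) :
    residueDensity (X ∪ Y) ≤ residueDensity X + residueDensity Y := by
  refine le_ciInf_add_ciInf fun k m => ?_
  have hunion : (rk (k * m) (X ∪ Y) : ℝ) ≤ rk (k * m) X + rk (k * m) Y :=
    mod_cast rk_union_le (k * m) X Y
  calc residueDensity (X ∪ Y) ≤ rk (k * m) (X ∪ Y) / (k * m : ℕ) :=
        residueDensity_le (Nat.mul_pos k.pos m.pos) _
    _ ≤ (rk (k * m) X + rk (k * m) Y) / (k * m : ℕ) := by gcongr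
    _ = rk (m * k) X / (m * k : ℕ) + rk (k * m) Y / (k * m : ℕ) := by
        rw [add_div, Nat.mul_comm m k]
    _ ≤ rk k X / (k : ℕ) + rk m Y / (m : ℕ) :=
        add_le_add (rk_mul_div_le m.pos k.pos X) (rk_mul_div_le k.pos m.pos Y)

lemma residueDensity_eq_iInf_mul (hk : 0 < k) (X : Set ℕ) :
    residueDensity X = ⨅ m : ℕ+, (rk (k * m) X : ℝ) / (k * m : ℕ) := by
  refine le_antisymm (le_ciInf fun m => residueDensity_le (Nat.mul_pos hk m.pos) X) ?_
  refine ciInf_mono ⟨0, Set.forall_mem_range.2 fun _ => by positivity⟩ fun m => ?_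
  exact rk_mul_div_le hk m.pos X

lemma residueDensity_image_mul (hk : 0 < k) (X : Set ℕ) :
    residueDensity ((k * ·) '' X) = residueDensity X / k := by
  rw [residueDensity_eq_iInf_mul hk, residueDensity, div_eq_mul_inv,
    Real.iInf_mul_of_nonneg (by positivity)]
  refine iInf_congr fun m => ?_
  rw [rk_mul_image_mul hk m.pos, Nat.cast_mul, mul_comm (k : ℝ), ← div_div,
    div_eq_mul_inv _ (k : ℝ)]

lemma residueDensity_image_add (X : Set ℕ) (h : ℕ) :
    residueDensity ((· + h) '' X) = residueDensity X :=
  iInf_congr fun k => by rw [rk_image_add k.pos]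

lemma isUpperQuasiDensity_residueDensity : IsUpperQuasiDensity residueDensity := by
  refine ⟨residueDensity_univ, fun X => ?_, residueDensity_union_le,
    fun X k hk => residueDensity_image_mul hk X, residueDensity_image_add⟩
  calc residueDensity X ≤ rk 1 X / (1 : ℕ) := residueDensity_le one_pos X
    _ ≤ 1 := by simpa using rk_le_self 1 X

lemma IsUpperQuasiDensity.apply_le_residueDensity {μ : Set ℕ → ℝ} (hμ : IsUpperQuasiDensity μ)
    (X : Set ℕ) : μ X ≤ residueDensity X :=
  le_ciInf fun k => hμ.apply_le_rk_div k.pos X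

lemma smallSet_iff_residueDensity_eq_zero : SmallSet X ↔ residueDensity X = 0 :=
  ⟨fun hX => hX _ isUpperQuasiDensity_residueDensity, fun hX _ hμ =>
    le_antisymm (hX ▸ hμ.apply_le_residueDensity X) (hμ.apply_nonneg X)⟩

lemma residueDensity_eq_zero_of_finite (hX : X.Finite) : residueDensity X = 0 := by
  refine le_antisymm ?_ (residueDensity_nonneg X)
  refine ge_of_tendsto (tendsto_const_div_atTop_nhds_zero_nat (X.ncard : ℝ)) ?_
  filter_upwards [eventually_gt_atTop 0] with k hk
  have hle : (rk k X : ℝ) ≤ X.ncard := mod_cast rk_le_ncard hk hX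
  exact (residueDensity_le hk X).trans (by gcongr)

lemma residueDensity_range_affine (hk : 0 < k) (h : ℕ) :
    residueDensity (Set.range fun x => k * x + h) = 1 / k := by
  rw [← Set.image_univ, isUpperQuasiDensity_residueDensity.apply_image_affine hk,
    residueDensity_univ]

lemma residueDensity_eq_zero_of_forall_exists_coprime {c : ℝ} (hc : c < 1)
    (hX : ∀ k, 0 < k → ∃ m, 0 < m ∧ k.Coprime m ∧ (rk m X : ℝ) ≤ c * m) :
    residueDensity X = 0 := by
  have hc₀ : 0 ≤ c := by
    obtain ⟨m, hm, -, hrk⟩ := hX 1 one_pos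
    have hm' : (0 : ℝ) < m := mod_cast hm
    exact nonneg_of_mul_nonneg_left ((Nat.cast_nonneg _).trans hrk) hm'
  have hle : residueDensity X ≤ c * residueDensity X := by
    conv_rhs => rw [residueDensity, Real.mul_iInf_of_nonneg hc₀]
    refine le_ciInf fun k => ?_
    obtain ⟨m, hm, hkm, hrk⟩ := hX k k.pos
    have hm' : (m : ℝ) ≠ 0 := mod_cast hm.ne'
    have hmul : (rk (k * m) X : ℝ) ≤ rk k X * rk m X := mod_cast rk_mul_le_of_coprime k.pos hm hkm X
    calc residueDensity X ≤ rk (k * m) X / (k * m : ℕ) :=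
          residueDensity_le (Nat.mul_pos k.pos hm) X
      _ ≤ rk k X * (c * m) / (k * m : ℕ) := by
          gcongr
          exact hmul.trans (by gcongr)
      _ = c * (rk k X / (k : ℕ)) := by
          rw [Nat.cast_mul, ← mul_assoc, mul_div_mul_right _ _ hm', mul_comm _ c, mul_div_assoc]
  exact le_antisymm (by nlinarith) (residueDensity_nonneg X)

end ResidueDensity

section ValueSet

open Polynomial

lemma sum_eval_eq_zero_of_natDegree_lt {K : Type*} [Field K] [Fintype K] {P : K[X]}
    (hP : P.natDegree < Fintype.card K - 1) : ∑ a, P.eval a = 0 := by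
  simp only [eval_eq_sum_range]
  rw [Finset.sum_comm]
  refine Finset.sum_eq_zero fun i hi => ?_
  have hi' : i < Fintype.card K - 1 := (Nat.lt_succ_iff.1 (Finset.mem_range.1 hi)).trans_lt hP
  rw [← Finset.mul_sum, FiniteField.sum_pow_lt_card_sub_one K i hi', mul_zero]

lemma card_filter_card_fiber_ne_one_le {α : Type*} [Fintype α] [DecidableEq α] (f : α → α) :
    (Finset.univ.filter fun b => (Finset.univ.filter fun a => f a = b).card ≠ 1).card ≤
      2 * (Fintype.card α - (Finset.univ.image f).card) := by
  set N : α → ℕ := fun b => (Finset.univ.filter fun a => f a = b).card with hN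
  have hNsum : ∑ b, N b = Fintype.card α :=
    (Finset.card_eq_sum_card_fiberwise fun a _ => Finset.mem_univ (f a)).symm
  have hmissed : (Finset.univ.filter fun b => N b = 0) = (Finset.univ.image f)ᶜ := by
    ext b
    simp [hN, Finset.filter_eq_empty_iff]
  have hpointwise (b : α) :
      (if N b ≠ 1 then 1 else 0) + 1 ≤ 2 * (if N b = 0 then 1 else 0) + N b := by
    split_ifs <;> omega
  have hsum := Finset.sum_le_sum fun b (_ : b ∈ Finset.univ) => hpointwise b
  rw [Finset.sum_add_distrib, Finset.sum_add_distrib, ← Finset.mul_sum, ← Finset.card_filter,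
    ← Finset.card_filter, hNsum, hmissed, Finset.card_compl, Finset.sum_const, smul_eq_mul,
    mul_one, Finset.card_univ] at hsum
  exact Nat.le_of_add_le_add_right hsum

lemma exists_natDegree_lt_sum_mul_eval_ne_zero {K : Type*} [Field K] {S : Finset K} {w : K → K}
    {v : K} (hv : v ∈ S) (hw : w v ≠ 0) :
    ∃ P : K[X], P.natDegree < S.card ∧ ∑ b ∈ S, w b * P.eval b ≠ 0 := by
  classical
  have hid : Set.InjOn (id : K → K) S := Function.injective_id.injOn
  refine ⟨Lagrange.basis S id v, ?_, ?_⟩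
  · rw [Lagrange.natDegree_basis hid hv]
    exact Nat.sub_lt (Finset.card_pos.2 ⟨v, hv⟩) one_pos
  · have hself : (Lagrange.basis S id v).eval v = 1 := Lagrange.eval_basis_self hid hv
    rwa [Finset.sum_eq_single_of_mem v hv, hself, mul_one]
    intro b hb hbv
    have hother : (Lagrange.basis S id v).eval b = 0 :=
      Lagrange.eval_basis_of_ne (v := id) hbv.symm hb
    rw [hother, mul_zero]

variable {K : Type*} [Field K] [Fintype K] [DecidableEq K] {G : K[X]} {d : ℕ}

-- If `P` and `P ∘ G` both have degree less than `|K| - 1`, then the sums of `P` over `K` and over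
-- the values of `G` both vanish, so `P` is orthogonal to `N - 1`, with `N` the fibre cardinality.
-- But `N - 1` is nonzero at an omitted value, so it is not orthogonal to all `P` of degree less
-- than the size of its support.
lemma card_sub_one_le_mul_card_fiber_ne_one (hd : 0 < d) (hG : G.natDegree ≤ d)
    (hinj : ¬ Function.Injective fun a => G.eval a) :
    Fintype.card K - 1 ≤ d *
      (Finset.univ.filter fun b => (Finset.univ.filter fun a => G.eval a = b).card ≠ 1).card := by
  set N : K → ℕ := fun b => (Finset.univ.filter fun a => G.eval a = b).card with hN
  set S : Finset K := Finset.univ.filter fun b => N b ≠ 1 with hS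
  obtain ⟨v, hv⟩ : ∃ v, ∀ a, G.eval a ≠ v := by
    simpa only [Finite.injective_iff_surjective, Function.Surjective, not_forall, not_exists]
      using hinj
  have hNv : N v = 0 := Finset.card_eq_zero.2 (Finset.filter_eq_empty_iff.2 fun a _ => hv a)
  have hvS : v ∈ S := Finset.mem_filter.2 ⟨Finset.mem_univ v, by omega⟩
  obtain ⟨P, hPdeg, hP⟩ := exists_natDegree_lt_sum_mul_eval_ne_zero
    (w := fun b => (N b : K) - 1) hvS (by simp [hNv])
  by_contra! hsmall
  have hself : ∑ b, P.eval b = 0 := sum_eval_eq_zero_of_natDegree_lt <|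
    (hPdeg.le.trans (Nat.le_mul_of_pos_left _ hd)).trans_lt hsmall
  have hcomp : ∑ a, P.eval (G.eval a) = 0 := by
    have hdeg : (P.comp G).natDegree < Fintype.card K - 1 := by
      rw [natDegree_comp, mul_comm]
      exact (Nat.mul_le_mul hG hPdeg.le).trans_lt hsmall
    simpa only [eval_comp] using sum_eval_eq_zero_of_natDegree_lt hdeg
  have hfiber : ∑ a, P.eval (G.eval a) = ∑ b, N b * P.eval b := by
    rw [← Finset.sum_fiberwise' Finset.univ (fun a => G.eval a) fun b => P.eval b]
    simp only [hN, Finset.sum_const, nsmul_eq_mul]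
  refine hP ?_
  calc ∑ b ∈ S, ((N b : K) - 1) * P.eval b = ∑ b, ((N b : K) - 1) * P.eval b := by
        refine Finset.sum_subset (Finset.subset_univ S) fun b _ hbS => ?_
        have hNb : N b = 1 := by simpa [hS] using hbS
        rw [hNb, Nat.cast_one, sub_self, zero_mul]
    _ = ∑ a, P.eval (G.eval a) - ∑ b, P.eval b := by
        simp only [sub_mul, one_mul, Finset.sum_sub_distrib, hfiber]
    _ = 0 := by rw [hcomp, hself, sub_zero]

lemma card_sub_one_le_mul_card_sub_card_image_eval (hd : 0 < d) (hG : G.natDegree ≤ d)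
    (hinj : ¬ Function.Injective fun a => G.eval a) :
    Fintype.card K - 1 ≤
      2 * d * (Fintype.card K - (Finset.univ.image fun a => G.eval a).card) := by
  rw [Nat.mul_comm 2 d, Nat.mul_assoc]
  exact (card_sub_one_le_mul_card_fiber_ne_one hd hG hinj).trans
    (Nat.mul_le_mul_left d (card_filter_card_fiber_ne_one_le _))

end ValueSet

section PrimeDivisors

open Polynomial

lemma exists_prime_gt_dvd_factorial_mul_add_one {n : ℕ} {a : ℤ}
    (ha : (n.factorial * a + 1).natAbs ≠ 1) :
    ∃ p : ℕ, p.Prime ∧ n < p ∧ (p : ℤ) ∣ n.factorial * a + 1 := by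
  obtain ⟨p, hp, hdvd⟩ := Nat.exists_prime_and_dvd ha
  rw [← Int.natCast_dvd] at hdvd
  refine ⟨p, hp, ?_, hdvd⟩
  by_contra! hpn
  have hfact : (p : ℤ) ∣ n.factorial * a :=
    (Int.natCast_dvd_natCast.2 (hp.dvd_factorial.2 hpn)).mul_right a
  exact hp.one_lt.ne' (Nat.dvd_one.1 (mod_cast (dvd_add_right hfact).1 hdvd))

-- Schur: with `c = P(0) ≠ 0`, the values `P(c n! t)` are `c` times integers `≡ 1 [MOD n!]`.
lemma exists_prime_gt_dvd_eval {P : ℤ[X]} (hP : P.natDegree ≠ 0) (n : ℕ) :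
    ∃ p : ℕ, p.Prime ∧ n < p ∧ ∃ x : ℤ, (p : ℤ) ∣ P.eval x := by
  obtain ⟨c, hc⟩ : ∃ c, P.eval 0 = c := ⟨_, rfl⟩
  by_cases hc₀ : c = 0
  · obtain ⟨p, hnp, hp⟩ := Nat.exists_infinite_primes (n + 1)
    exact ⟨p, hp, hnp, 0, by rw [hc, hc₀]; exact dvd_zero _⟩
  set m : ℤ := c * n.factorial with hm
  have hm₀ : m ≠ 0 := mul_ne_zero hc₀ (mod_cast n.factorial_ne_zero)
  have := P.tendstoCofinite_of_natDegree_ne_zero hP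
  obtain ⟨_, ⟨t, rfl⟩, ht⟩ : ∃ x ∈ Set.range (m * ·), x ∉ (fun x => P.eval x) ⁻¹' {c, -c} :=
    (Set.infinite_range_of_injective (mul_right_injective₀ hm₀)).exists_notMem_finite
      (TendstoCofinite.finite_preimage _ (Set.toFinite _))
  obtain ⟨s, hs⟩ : m * t ∣ P.eval (m * t) - c := by
    simpa only [sub_zero, hc] using sub_dvd_eval_sub (m * t) 0 P
  have hfactor : P.eval (m * t) = c * (n.factorial * (t * s) + 1) := by
    linear_combination hs + t * s * hm
  have hunit : (n.factorial * (t * s) + 1).natAbs ≠ 1 := fun h => ht <| by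
    rw [Set.mem_preimage, hfactor]
    rcases Int.natAbs_eq_iff.1 h with h | h <;> simp [h]
  obtain ⟨p, hp, hnp, hdvd⟩ := exists_prime_gt_dvd_factorial_mul_add_one hunit
  exact ⟨p, hp, hnp, m * t, hfactor ▸ hdvd.mul_left c⟩

lemma natDegree_taylor_one_sub_ne_zero {R : Type*} [CommRing R] [IsDomain R] [CharZero R]
    {F : R[X]} (hF : 2 ≤ F.natDegree) : (taylor 1 F - F).natDegree ≠ 0 := by
  intro hconst
  obtain ⟨c, hc⟩ := natDegree_eq_zero.1 hconst
  have hstep (x : R) : F.eval (x + 1) = F.eval x + c := by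
    have := congrArg (eval x) hc
    rw [eval_C, eval_sub, taylor_eval] at this
    linear_combination -this
  have hlinear (n : ℕ) : F.eval (n : R) = (C c * X + C (F.eval 0)).eval (n : R) := by
    induction n with
    | zero => simp
    | succ n ih =>
      rw [Nat.cast_succ, hstep, ih]
      simp only [eval_add, eval_mul, eval_C, eval_X]
      ring
  have hF' : F = C c * X + C (F.eval 0) :=
    eq_of_infinite_eval_eq _ _ <|
      (Set.infinite_range_of_injective Nat.cast_injective).mono (Set.range_subset_iff.2 hlinear)
  have hle : F.natDegree ≤ 1 := hF' ▸ natDegree_linear_le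
  omega

lemma exists_prime_gt_not_injective_eval {F : ℤ[X]} (hF : 2 ≤ F.natDegree) (n : ℕ) :
    ∃ p : ℕ, p.Prime ∧ n < p ∧
      ¬ Function.Injective fun a : ZMod p => (F.map (Int.castRingHom (ZMod p))).eval a := by
  obtain ⟨p, hp, hnp, x, hx⟩ := exists_prime_gt_dvd_eval (natDegree_taylor_one_sub_ne_zero hF) n
  refine ⟨p, hp, hnp, fun hinj => ?_⟩
  have : Fact p.Prime := ⟨hp⟩
  have hcollide : ((F.eval (x + 1) : ℤ) : ZMod p) = (F.eval x : ℤ) := by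
    rw [← sub_eq_zero, ← Int.cast_sub, ZMod.intCast_zmod_eq_zero_iff_dvd]
    rwa [eval_sub, taylor_eval] at hx
  have heq : ((x + 1 : ℤ) : ZMod p) = (x : ℤ) := hinj <| by
    simpa only [eval_intCast_map, Int.cast_id, eq_intCast] using hcollide
  simp at heq

end PrimeDivisors

section PolynomialImage

open Polynomial

lemma rk_range_eval_le (F : ℕ[X]) (p : ℕ) [NeZero p] :
    rk p (Set.range fun x => F.eval x) ≤
      (Finset.univ.image fun a => (F.map (Nat.castRingHom (ZMod p))).eval a).card := by
  rw [rk_eq_ncard_image_mod (NeZero.pos p), ← Set.ncard_coe_finset]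
  refine Set.ncard_le_ncard_of_injOn (Nat.cast : ℕ → ZMod p) ?_ ?_ (Finset.finite_toSet _)
  · rintro _ ⟨_, ⟨x, rfl⟩, rfl⟩
    have heval := eval_natCast_map (Nat.castRingHom (ZMod p)) F x
    simp only [ZMod.natCast_mod, Finset.coe_image, Finset.coe_univ, Set.image_univ]
    exact ⟨x, heval⟩
  · rintro _ ⟨y, -, rfl⟩ _ ⟨z, -, rfl⟩ hyz
    rwa [ZMod.natCast_mod, ZMod.natCast_mod, ZMod.natCast_eq_natCast_iff'] at hyz

lemma exists_prime_gt_rk_range_eval_le {F : ℕ[X]} (hF : 2 ≤ F.natDegree) (n : ℕ) :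
    ∃ p : ℕ, p.Prime ∧ n < p ∧
      (rk p (Set.range fun x => F.eval x) : ℝ) ≤ (1 - 1 / (4 * F.natDegree)) * p := by
  have hdeg : (F.map (Nat.castRingHom ℤ)).natDegree = F.natDegree :=
    natDegree_map_eq_of_injective Nat.cast_injective F
  obtain ⟨p, hp, hnp, hinj⟩ := exists_prime_gt_not_injective_eval (hdeg.symm ▸ hF) n
  refine ⟨p, hp, hnp, ?_⟩
  have : Fact p.Prime := ⟨hp⟩
  have hcomp : (Int.castRingHom (ZMod p)).comp (Nat.castRingHom ℤ) = Nat.castRingHom (ZMod p) :=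
    Subsingleton.elim _ _
  rw [Polynomial.map_map, hcomp] at hinj
  set v := (Finset.univ.image fun a => (F.map (Nat.castRingHom (ZMod p))).eval a).card
  have hv : v ≤ p := by simpa only [ZMod.card] using Finset.card_le_univ (α := ZMod p) _
  have hbound : p - 1 ≤ 2 * F.natDegree * (p - v) := by
    simpa only [ZMod.card] using
      card_sub_one_le_mul_card_sub_card_image_eval (by omega) natDegree_map_le hinj
  have hbound' : (p : ℝ) - 1 ≤ 2 * F.natDegree * (p - v) := by
    have := (Nat.cast_le (α := ℝ)).2 hbound
    push_cast [Nat.cast_sub hv, Nat.cast_sub hp.one_le] at this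
    exact this
  have hp₂ : (2 : ℝ) ≤ p := mod_cast hp.two_le
  have hd : (0 : ℝ) < F.natDegree := mod_cast (by omega : 0 < F.natDegree)
  have hmissed : (p : ℝ) / (4 * F.natDegree) ≤ p - v := by
    rw [div_le_iff₀ (mul_pos four_pos hd)]
    linarith
  calc (rk p (Set.range fun x => F.eval x) : ℝ) ≤ v := mod_cast rk_range_eval_le F p
    _ ≤ p - p / (4 * F.natDegree) := by linarith
    _ = (1 - 1 / (4 * F.natDegree)) * p := by ring

lemma residueDensity_range_eval_of_two_le_natDegree {F : ℕ[X]} (hF : 2 ≤ F.natDegree) :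
    residueDensity (Set.range fun x => F.eval x) = 0 := by
  have hd : (0 : ℝ) < F.natDegree := mod_cast (by omega : 0 < F.natDegree)
  refine residueDensity_eq_zero_of_forall_exists_coprime
    (sub_lt_self 1 (one_div_pos.2 (mul_pos four_pos hd))) fun k hk => ?_
  obtain ⟨p, hp, hkp, hrk⟩ := exists_prime_gt_rk_range_eval_le hF k
  exact ⟨p, hp.pos, (Nat.coprime_of_lt_prime hk.ne' hkp hp).symm, hrk⟩

lemma residueDensity_range_eval_of_natDegree_eq_zero {F : ℕ[X]} (hF : F.natDegree = 0) :
    residueDensity (Set.range fun x => F.eval x) = 0 := by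
  refine residueDensity_eq_zero_of_finite ((Set.finite_singleton (F.coeff 0)).subset ?_)
  rw [eq_C_of_natDegree_eq_zero hF]
  simp

lemma residueDensity_range_eval_of_natDegree_eq_one {F : ℕ[X]} (hF : F.natDegree = 1) :
    residueDensity (Set.range fun x => F.eval x) = 1 / F.leadingCoeff := by
  obtain ⟨a, ha, b, rfl⟩ := natDegree_eq_one.1 hF
  rw [leadingCoeff_linear ha]
  simpa using residueDensity_range_affine (Nat.pos_of_ne_zero ha) b

end PolynomialImage

/-- For a polynomial F with coefficients in ℕ, the image F(ℕ) is small if and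
only if the degree of F is not equal to 1. -/
theorem smallSet_polynomial_image_iff (F : Polynomial ℕ) :
    SmallSet (Set.range fun x : ℕ => Polynomial.eval x F) ↔ F.degree ≠ 1 := by
  have hdeg : F.degree = 1 ↔ F.natDegree = 1 :=
    Polynomial.degree_eq_iff_natDegree_eq_of_pos one_pos
  rw [smallSet_iff_residueDensity_eq_zero, Ne, hdeg]
  constructor
  · intro hzero hone
    have hF : F.leadingCoeff ≠ 0 :=
      Polynomial.leadingCoeff_ne_zero.2 (Polynomial.ne_zero_of_natDegree_gt (hone ▸ one_pos))
    rw [residueDensity_range_eval_of_natDegree_eq_one hone] at hzero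
    exact one_div_ne_zero (Nat.cast_ne_zero.2 hF) hzero
  · intro hone
    rcases Nat.lt_or_ge F.natDegree 2 with hlt | hge
    · exact residueDensity_range_eval_of_natDegree_eq_zero (by omega)
    · exact residueDensity_range_eval_of_two_le_natDegree hge
end

section
/- Let F be a non-constant polynomial in one variable with integer coefficients. Then the set X := { k ∈ ℕ : F(k) is a prime element of ℤ (i.e., |F(k)| is a prime number) } is small. -/
open Set Filter Topology

/-!
Let `p` be a prime modulo which `F` has a root `a`. If `k ≡ a` modulo `p` and `F k` is prime, then
`F k = ± p`, which happens for finitely many `k` only. So, up to a finite set, `X` avoids one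
residue class modulo each such `p`; splitting `ℕ` into classes modulo the primes of a finite set `S`
of them gives `μ X ≤ ∏ p ∈ S, (1 - 1 / p) ≤ exp (-∑ p ∈ S, 1 / p)` for every upper quasi-density.

It remains to see that `∑ 1 / p` diverges over the primes modulo which `F` has a root. After scaling
its roots, `F` is monic with a root in the ring of integers of a number field `K`. There `F` has a
root in every residue field, so each prime of `K` of degree one lies over such a `p`, and the primes
of higher degree contribute a convergent sum. The sum of `1 / N P` over all primes `P` of `K`
diverges by comparing finite Euler products with the sum of `1 / N I` over all nonzero ideals `I`,
which diverges because the number of ideals of norm at most `x` is asymptotically proportional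
to `x`.
-/

section Summable

theorem exists_pos_forall_le_prod_one_sub {ι : Type*} {x : ι → ℝ} (hx0 : ∀ i, 0 ≤ x i)
    (hx1 : ∀ i, x i < 1) (hx : Summable x) :
    ∃ c > 0, ∀ T : Finset ι, c ≤ ∏ i ∈ T, (1 - x i) := by
  have hlog : Summable fun i => -Real.log (1 - x i) := by
    simpa only [sub_eq_add_neg] using (Real.summable_log_one_add_of_summable hx.neg).neg
  refine ⟨Real.exp (-∑' i, -Real.log (1 - x i)), Real.exp_pos _, fun T => ?_⟩
  calc Real.exp (-∑' i, -Real.log (1 - x i))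
      ≤ Real.exp (∑ i ∈ T, Real.log (1 - x i)) := by
        have := hlog.sum_le_tsum T fun i _ =>
          neg_nonneg.2 (Real.log_nonpos (sub_nonneg.2 (hx1 i).le) (sub_le_self 1 (hx0 i)))
        rw [Finset.sum_neg_distrib] at this
        gcongr
        linarith
    _ = ∏ i ∈ T, (1 - x i) := by
        rw [Real.exp_sum]
        exact Finset.prod_congr rfl fun i _ => Real.exp_log (sub_pos.2 (hx1 i))

theorem tendsto_card_le_div_of_summable_inv {ι : Type*} {N : ι → ℝ} (hN : ∀ i, 0 < N i)
    (h : Summable fun i => (N i)⁻¹) :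
    Tendsto (fun x : ℝ => (Nat.card {i // N i ≤ x} : ℝ) / x) atTop (𝓝 0) := by
  have hcard (x : ℝ) : (Nat.card {i // N i ≤ x} : ℝ) / x =
      ∑' i, {i | N i ≤ x}.indicator (fun _ => x⁻¹) i := by
    rw [← tsum_subtype {i | N i ≤ x}, tsum_const, nsmul_eq_mul, div_eq_mul_inv]
    rfl
  simp only [hcard]
  rw [← tsum_zero (β := ι)]
  refine tendsto_tsum_of_dominated_convergence h (fun i => ?_) ?_
  · refine tendsto_inv_atTop_zero.congr' ?_
    filter_upwards [eventually_ge_atTop (N i)] with x hx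
    exact (indicator_of_mem (by exact hx) _).symm
  · filter_upwards [eventually_gt_atTop 0] with x hx i
    by_cases hi : N i ≤ x
    · rw [indicator_of_mem (by exact hi), Real.norm_of_nonneg (inv_nonneg.2 hx.le)]
      exact inv_anti₀ (hN i) hi
    · rw [indicator_of_notMem (by exact hi), norm_zero]
      exact (inv_pos.2 (hN i)).le

theorem summable_comp_of_encard_preimage_le {α β : Type*} {g : β → ℝ} (hg0 : ∀ b, 0 ≤ g b)
    (hg : Summable g) {π : α → β} {d : ℕ} (hπ : ∀ b, (π ⁻¹' {b}).encard ≤ d) :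
    Summable fun a => g (π a) := by
  classical
  refine summable_of_sum_le (fun a => hg0 _) (c := d * ∑' b, g b) fun s => ?_
  have hfib (b : β) : (s.filter (π · = b)).card ≤ d := by
    have hsub : ((s.filter (π · = b) : Finset α) : Set α) ⊆ π ⁻¹' {b} := fun a ha =>
      (Finset.mem_filter.1 ha).2
    exact_mod_cast (encard_coe_eq_coe_finsetCard _ ▸ encard_mono hsub).trans (hπ b)
  calc ∑ a ∈ s, g (π a)
      = ∑ b ∈ s.image π, (s.filter (π · = b)).card • g b := Finset.sum_comp g π
    _ ≤ ∑ b ∈ s.image π, d * g b := by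
      gcongr with b
      rw [nsmul_eq_mul]
      gcongr
      · exact hg0 b
      · exact hfib b
    _ ≤ d * ∑' b, g b := by
      rw [← Finset.mul_sum]
      gcongr
      exact hg.sum_le_tsum _ fun b _ => hg0 b

end Summable

section EulerProduct

variable {M : Type*} [CommMonoidWithZero M]

/-- A finite set of nonzero elements containing all divisors of its members: the finite truncations
over which an Euler product is compared with a sum. -/
structure IsDivisorClosed (D : Finset M) : Prop where
  zero_notMem : 0 ∉ D
  mem_of_dvd {a b : M} : a ∈ D → b ∣ a → b ∈ D

variable {D : Finset M}

open scoped Classical in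
theorem IsDivisorClosed.filter_forall_not_dvd (hD : IsDivisorClosed D) (T : Finset M) :
    IsDivisorClosed {a ∈ D | ∀ p ∈ T, ¬ p ∣ a} where
  zero_notMem h := hD.zero_notMem (Finset.mem_of_mem_filter _ h)
  mem_of_dvd {a b} ha hba := by
    rw [Finset.mem_filter] at ha ⊢
    exact ⟨hD.mem_of_dvd ha.1 hba, fun p hp hpb => ha.2 p hp (hpb.trans hba)⟩

theorem exists_isDivisorClosed_superset [UniqueFactorizationMonoid M] [Finite Mˣ]
    {u : Finset M} (hu : 0 ∉ u) : ∃ D, IsDivisorClosed D ∧ u ⊆ D := by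
  have := Fintype.ofFinite Mˣ
  have hfin : (⋃ a ∈ u, {b : M | b ∣ a}).Finite := u.finite_toSet.biUnion fun a ha =>
    have := UniqueFactorizationMonoid.fintypeSubtypeDvd a (ne_of_mem_of_not_mem ha hu)
    (Finite.of_fintype {b : M // b ∣ a} : _)
  refine ⟨hfin.toFinset, ⟨?_, ?_⟩, fun a ha => ?_⟩
  · simpa using hu
  · simp only [Finite.mem_toFinset, mem_iUnion₂, mem_ofPred_eq]
    rintro a b ⟨c, hc, hac⟩ hba
    exact ⟨c, hc, hba.trans hac⟩
  · simp only [Finite.mem_toFinset, mem_iUnion₂]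
    exact ⟨a, ha, dvd_rfl⟩

variable {f : M →*₀ ℝ} (hf : ∀ a, 0 ≤ f a)
include hf

open scoped Classical in
theorem IsDivisorClosed.sum_filter_dvd_le [IsCancelMulZero M] (hD : IsDivisorClosed D)
    (p : M) : ∑ a ∈ D with p ∣ a, f a ≤ f p * ∑ a ∈ D, f a := by
  obtain rfl | hp := eq_or_ne p 0
  · have hempty : ∀ a ∈ D, ¬ 0 ∣ a := fun a ha h0 => hD.zero_notMem (zero_dvd_iff.1 h0 ▸ ha)
    rw [Finset.filter_false_of_mem hempty, Finset.sum_empty, map_zero, zero_mul]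
  have hsub : ({a ∈ D | p ∣ a} : Finset M) ⊆ D.image (p * ·) := by
    intro a ha
    obtain ⟨haD, b, rfl⟩ := Finset.mem_filter.1 ha
    exact Finset.mem_image_of_mem _ (hD.mem_of_dvd haD (dvd_mul_left b p))
  calc ∑ a ∈ D with p ∣ a, f a
      ≤ ∑ a ∈ D.image (p * ·), f a := Finset.sum_le_sum_of_subset_of_nonneg hsub fun a _ _ => hf a
    _ = f p * ∑ a ∈ D, f a := by
      rw [Finset.sum_image (mul_right_injective₀ hp).injOn, Finset.mul_sum]
      simp only [map_mul]

open scoped Classical in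
theorem IsDivisorClosed.prod_one_sub_mul_sum_le [IsCancelMulZero M] (hD : IsDivisorClosed D)
    {T : Finset M} (hT : ∀ p ∈ T, f p ≤ 1) :
    (∏ p ∈ T, (1 - f p)) * ∑ a ∈ D, f a ≤ ∑ a ∈ D with ∀ p ∈ T, ¬ p ∣ a, f a := by
  induction T using Finset.induction_on with
  | empty => simp
  | insert p T hpT ih =>
    rw [Finset.forall_mem_insert] at hT
    set E : Finset M := {a ∈ D | ∀ q ∈ T, ¬ q ∣ a} with hE
    have hsplit := Finset.sum_filter_add_sum_filter_not E (p ∣ ·) f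
    have hmul := (hD.filter_forall_not_dvd T).sum_filter_dvd_le hf p
    calc (∏ q ∈ insert p T, (1 - f q)) * ∑ a ∈ D, f a
        = (1 - f p) * ((∏ q ∈ T, (1 - f q)) * ∑ a ∈ D, f a) := by
          rw [Finset.prod_insert hpT, mul_assoc]
      _ ≤ (1 - f p) * ∑ a ∈ E, f a :=
          mul_le_mul_of_nonneg_left (ih hT.2) (sub_nonneg.2 hT.1)
      _ ≤ ∑ a ∈ E with ¬ p ∣ a, f a := by linarith
      _ = ∑ a ∈ D with ∀ q ∈ insert p T, ¬ q ∣ a, f a := by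
          simp only [hE, Finset.filter_filter, Finset.forall_mem_insert, and_comm]

theorem IsDivisorClosed.prod_one_sub_mul_sum_le_one [UniqueFactorizationMonoid M]
    [Subsingleton Mˣ] (hD : IsDivisorClosed D) {T : Finset M} (hT : ∀ p ∈ T, f p ≤ 1)
    (hDT : ∀ p ∈ D, Prime p → p ∈ T) : (∏ p ∈ T, (1 - f p)) * ∑ a ∈ D, f a ≤ 1 := by
  classical
  have hsub : ({a ∈ D | ∀ p ∈ T, ¬ p ∣ a} : Finset M) ⊆ {1} := by
    intro a ha
    rw [Finset.mem_filter] at ha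
    rw [Finset.mem_singleton, ← isUnit_iff_eq_one]
    by_contra hunit
    obtain ⟨p, hp, hpa⟩ := WfDvdMonoid.exists_irreducible_factor hunit
      (ne_of_mem_of_not_mem ha.1 hD.zero_notMem)
    exact ha.2 p (hDT p (hD.mem_of_dvd ha.1 hpa) hp.prime) hpa
  calc (∏ p ∈ T, (1 - f p)) * ∑ a ∈ D, f a
      ≤ ∑ a ∈ D with ∀ p ∈ T, ¬ p ∣ a, f a := by
        convert hD.prod_one_sub_mul_sum_le hf hT
    _ ≤ ∑ a ∈ {1}, f a := Finset.sum_le_sum_of_subset_of_nonneg hsub fun a _ _ => hf a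
    _ = 1 := by rw [Finset.sum_singleton, map_one]

theorem summable_of_summable_primes [UniqueFactorizationMonoid M] [Subsingleton Mˣ]
    (hf_lt : ∀ p, Prime p → f p < 1) (hsum : Summable fun p : {p : M // Prime p} => f p) :
    Summable f := by
  classical
  obtain ⟨c, hc, hprod⟩ := exists_pos_forall_le_prod_one_sub
    (fun p : {p : M // Prime p} => hf p) (fun p => hf_lt p p.2) hsum
  refine summable_of_sum_le hf (c := c⁻¹) fun u => ?_
  obtain ⟨D, hD, huD⟩ := exists_isDivisorClosed_superset (Finset.notMem_erase 0 u)
  have hprodD : c ≤ ∏ p ∈ D with Prime p, (1 - f p) :=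
    (hprod (D.subtype Prime)).trans_eq (Finset.prod_subtype_eq_prod_filter (1 - f ·))
  have hsum0 : 0 ≤ ∑ a ∈ D, f a := Finset.sum_nonneg fun a _ => hf a
  calc ∑ a ∈ u, f a
      = ∑ a ∈ u.erase 0, f a := (Finset.sum_erase u (map_zero f)).symm
    _ ≤ ∑ a ∈ D, f a := Finset.sum_le_sum_of_subset_of_nonneg huD fun a _ _ => hf a
    _ ≤ c⁻¹ := by
      rw [← one_div, le_div_iff₀' hc]
      exact (mul_le_mul_of_nonneg_right hprodD hsum0).trans
        (hD.prod_one_sub_mul_sum_le_one hf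
          (fun p hp => (hf_lt p (Finset.mem_filter.1 hp).2).le)
          fun p hpD hp => Finset.mem_filter.2 ⟨hpD, hp⟩)

end EulerProduct

section NumberField

open NumberField nonZeroDivisors

variable (K : Type*) [Field K] [NumberField K]

theorem not_summable_inv_absNorm :
    ¬ Summable fun I : Ideal (𝓞 K) => (Ideal.absNorm I : ℝ)⁻¹ := by
  intro h
  have hpos (I : (Ideal (𝓞 K))⁰) : (0 : ℝ) < Ideal.absNorm (I : Ideal (𝓞 K)) :=
    Nat.cast_pos.2 (Ideal.absNorm_pos_of_nonZeroDivisors I)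
  have hzero := tendsto_card_le_div_of_summable_inv hpos (h.comp_injective Subtype.val_injective)
  have hresidue := NumberField.Ideal.tendsto_norm_le_div_atTop₀ K
  rw [← dedekindZeta_residue_def] at hresidue
  exact (dedekindZeta_residue_pos K).ne' (tendsto_nhds_unique hresidue hzero)

theorem not_summable_inv_absNorm_prime :
    ¬ Summable fun P : {P : Ideal (𝓞 K) // Prime P} =>
      (Ideal.absNorm (P : Ideal (𝓞 K)) : ℝ)⁻¹ := by
  let f : Ideal (𝓞 K) →*₀ ℝ := invMonoidWithZeroHom.comp
    ((Nat.castRingHom ℝ).toMonoidWithZeroHom.comp Ideal.absNorm)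
  have hf_lt (P : Ideal (𝓞 K)) (hP : Prime P) : f P < 1 :=
    inv_lt_one_of_one_lt₀ <| Nat.one_lt_cast.2 <|
      HeightOneSpectrum.one_lt_absNorm ⟨P, Ideal.isPrime_of_prime hP, hP.ne_zero⟩
  exact fun h => not_summable_inv_absNorm K <|
    summable_of_summable_primes (f := f) (fun I => inv_nonneg.2 (Nat.cast_nonneg _)) hf_lt h

end NumberField

theorem encard_primesOver_le_finrank {R : Type*} [CommRing R] [IsDomain R] (p : Ideal R)
    [p.IsMaximal] (S : Type*) [CommRing S] [IsDedekindDomain S] [Algebra R S] [Module.Finite R S]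
    [Module.Flat R S] : (p.primesOver S).encard ≤ Module.finrank R S := by
  have := (IsDedekindDomain.primesOver_finite p S).fintype
  rw [encard_eq_coe_toFinset_card, Nat.cast_le, toFinset_card, ← Finset.card_univ,
    ← Ideal.sum_ramification_inertia_eq_finrank p S, Finset.card_eq_sum_ones]
  refine Finset.sum_le_sum fun q _ => ?_
  have : (q : Ideal S).IsPrime := q.2.1
  exact Nat.mul_pos (Ideal.ramificationIdx_pos _ R) (Ideal.inertiaDeg_pos _ R)

section ResidueChar

variable {R : Type*} [CommRing R]

/-- The residue characteristic of an ideal: the nonnegative generator of its contraction to `ℤ`,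
obtained as the absolute norm of that contraction. -/
noncomputable def residueChar (P : Ideal R) : ℕ := Ideal.absNorm (P.under ℤ)

variable [IsDedekindDomain R] [Module.Finite ℤ R]

theorem prime_residueChar {P : Ideal R} (hP : Prime P) : (residueChar P).Prime :=
  have := Ideal.isPrime_of_prime hP
  have : NeZero P := ⟨hP.ne_zero⟩
  Nat.absNorm_under_prime P

variable [Module.Free ℤ R]

theorem absNorm_eq_residueChar_or_sq_le {P : Ideal R} (hP : Prime P) :
    Ideal.absNorm P = residueChar P ∨ residueChar P ^ 2 ≤ Ideal.absNorm P := by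
  have := Ideal.isPrime_of_prime hP
  have hpow : residueChar P ^ P.inertiaDeg ℤ = Ideal.absNorm P :=
    Ideal.pow_inertiaDeg (Ideal.absNorm (P.under ℤ)) P
  rw [← hpow]
  obtain hdeg | hdeg := (Nat.one_le_iff_ne_zero.2 (P.inertiaDeg_pos ℤ).ne').eq_or_lt
  · exact .inl (by rw [← hdeg, pow_one])
  · exact .inr (Nat.pow_le_pow_right (prime_residueChar hP).pos hdeg)

theorem encard_residueChar_eq_le_finrank (p : ℕ) :
    {P : {P : Ideal R // Prime P} | residueChar (P : Ideal R) = p}.encard ≤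
      Module.finrank ℤ R := by
  by_cases hp : p.Prime
  · have : Fact p.Prime := ⟨hp⟩
    have := Int.ideal_span_isMaximal_of_prime p
    refine le_trans ?_ (encard_primesOver_le_finrank (Ideal.span {(p : ℤ)}) R)
    refine encard_le_encard_of_injOn (f := Subtype.val) ?_ Subtype.val_injective.injOn
    rintro P rfl
    exact ⟨Ideal.isPrime_of_prime P.2, Int.liesOver_span_absNorm (P : Ideal R)⟩
  · have hempty : {P : {P : Ideal R // Prime P} | residueChar (P : Ideal R) = p} = ∅ :=
      eq_empty_of_forall_notMem fun P hP => hp (hP ▸ prime_residueChar P.2)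
    rw [hempty, encard_empty]
    exact zero_le

end ResidueChar

section RootPrimes

open Polynomial NumberField

/-- The primes modulo which `F` has a root, classically the prime divisors of `F`; they are the
moduli used to sieve the arguments at which `F` takes a prime value. -/
def rootPrimes (F : ℤ[X]) : Set ℕ := {p | p.Prime ∧ ∃ a : ZMod p, aeval a F = 0}

theorem aeval_ringHom_eq_zero {A B : Type*} [CommRing A] [CommRing B] (φ : A →+* B) {F : ℤ[X]}
    {a : A} (h : aeval a F = 0) : aeval (φ a) F = 0 := by
  rw [← map_zero φ, ← h]
  exact aeval_algHom_apply φ.toIntAlgHom a F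

theorem absNorm_mem_rootPrimes {R : Type*} [CommRing R] [IsDedekindDomain R] [Module.Free ℤ R]
    {F : ℤ[X]} {β : R} (hβ : aeval β F = 0) {P : Ideal R}
    (hP : (Ideal.absNorm P).Prime) : Ideal.absNorm P ∈ rootPrimes F := by
  have hcard : Nat.card (R ⧸ P) = Ideal.absNorm P := rfl
  have := Nat.finite_of_card_ne_zero (hcard ▸ hP.ne_zero)
  have := Fintype.ofFinite (R ⧸ P)
  let e := ZMod.ringEquivOfPrime (R ⧸ P) hP (Fintype.card_eq_nat_card.trans hcard)
  exact ⟨hP, _, aeval_ringHom_eq_zero ((e.symm : R ⧸ P →+* _).comp (Ideal.Quotient.mk P)) hβ⟩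

theorem not_summable_inv_rootPrimes_of_numberField {K : Type*} [Field K] [NumberField K]
    {F : ℤ[X]} {β : 𝓞 K} (hβ : aeval β F = 0) :
    ¬ Summable ((rootPrimes F).indicator fun p : ℕ => (p : ℝ)⁻¹) := by
  intro h
  let g (p : ℕ) : ℝ := (rootPrimes F).indicator (fun p : ℕ => (p : ℝ)⁻¹) p + ((p : ℝ) ^ 2)⁻¹
  have hind (p : ℕ) : 0 ≤ (rootPrimes F).indicator (fun p : ℕ => (p : ℝ)⁻¹) p :=
    indicator_nonneg (fun p _ => inv_nonneg.2 p.cast_nonneg) p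
  have hg0 (p : ℕ) : 0 ≤ g p := add_nonneg (hind p) (by positivity)
  have hg : Summable g := h.add (Real.summable_nat_pow_inv.2 one_lt_two)
  refine not_summable_inv_absNorm_prime K <| .of_nonneg_of_le
    (fun P => inv_nonneg.2 (Nat.cast_nonneg _)) (fun P => ?_)
    (summable_comp_of_encard_preimage_le hg0 hg encard_residueChar_eq_le_finrank)
  have hp := prime_residueChar P.2
  obtain heq | hsq := absNorm_eq_residueChar_or_sq_le P.2
  · rw [heq]
    refine le_add_of_le_of_nonneg ?_ (by positivity)
    rw [indicator_of_mem (heq ▸ absNorm_mem_rootPrimes hβ (heq ▸ hp))]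
  · refine le_add_of_nonneg_of_le (hind _) ?_
    have := hp.pos
    gcongr
    exact_mod_cast hsq

theorem exists_numberField_aeval_eq_zero {F : ℤ[X]} (hmonic : F.Monic) (hF : 0 < F.natDegree) :
    ∃ (K : Type) (_ : Field K) (_ : NumberField K) (β : 𝓞 K), aeval β F = 0 := by
  have hdeg : (F.map (algebraMap ℤ (AlgebraicClosure ℚ))).degree ≠ 0 := by
    rw [hmonic.degree_map]
    exact (natDegree_pos_iff_degree_pos.1 hF).ne'
  obtain ⟨α, hα⟩ := IsAlgClosed.exists_root _ hdeg
  rw [IsRoot.def, eval_map_algebraMap] at hα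
  have hint : IsIntegral ℤ α := ⟨F, hmonic, hα⟩
  let K := IntermediateField.adjoin ℚ {α}
  have : FiniteDimensional ℚ K := IntermediateField.adjoin.finiteDimensional hint.tower_top
  have : NumberField K := {}
  let α' : K := ⟨α, IntermediateField.mem_adjoin_simple_self ℚ α⟩
  have hα' : aeval α' F = 0 := Subtype.val_injective <|
    (aeval_algebraMap_apply (AlgebraicClosure ℚ) α' F).symm.trans hα
  let β : 𝓞 K := ⟨α', F, hmonic, hα'⟩
  refine ⟨K, inferInstance, inferInstance, β, RingOfIntegers.coe_injective ?_⟩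
  exact (aeval_algebraMap_apply K β F).symm.trans (hα'.trans (map_zero _).symm)

theorem rootPrimes_integralNormalization_subset {F : ℤ[X]} (hF : 0 < F.natDegree) :
    rootPrimes F.integralNormalization ⊆ rootPrimes F ∪ {p : ℕ | (p : ℤ) ∣ F.leadingCoeff} := by
  rintro p ⟨hp, b, hb⟩
  have : Fact p.Prime := ⟨hp⟩
  refine or_iff_not_imp_right.2 fun hc => ⟨hp, b / (F.leadingCoeff : ZMod p), ?_⟩
  have hc0 : (F.leadingCoeff : ZMod p) ≠ 0 := by rwa [Ne, ZMod.intCast_zmod_eq_zero_iff_dvd]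
  have hscale := integralNormalization_eval₂_leadingCoeff_mul hF (algebraMap ℤ (ZMod p))
    (b / (F.leadingCoeff : ZMod p))
  rw [algebraMap_int_eq, eq_intCast, mul_div_cancel₀ _ hc0, ← algebraMap_int_eq, ← aeval_def,
    ← aeval_def, hb] at hscale
  exact (mul_eq_zero.1 hscale.symm).resolve_left (pow_ne_zero _ hc0)

theorem not_summable_inv_rootPrimes {F : ℤ[X]} (hF : 0 < F.natDegree) :
    ¬ Summable fun p : rootPrimes F => ((p : ℕ) : ℝ)⁻¹ := by
  intro (h : Summable ((fun p : ℕ => (p : ℝ)⁻¹) ∘ ((↑) : rootPrimes F → ℕ)))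
  have hF0 : F ≠ 0 := ne_zero_of_natDegree_gt hF
  obtain ⟨K, _, _, β, hβ⟩ := exists_numberField_aeval_eq_zero
    (monic_integralNormalization hF0) (by rwa [natDegree_integralNormalization])
  refine not_summable_inv_rootPrimes_of_numberField hβ ?_
  have hbad : {p : ℕ | (p : ℤ) ∣ F.leadingCoeff}.Finite :=
    F.leadingCoeff.natAbs.divisors.finite_toSet.subset fun p hp => Finset.mem_coe.2 <|
      Nat.mem_divisors.2 ⟨Int.natCast_dvd.1 hp, Int.natAbs_ne_zero.2 (leadingCoeff_ne_zero.2 hF0)⟩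
  have hsum := (summable_subtype_iff_indicator.1 h).indicator (rootPrimes F.integralNormalization)
  refine (summable_congr_cofinite ?_).1 hsum
  filter_upwards [hbad.eventually_cofinite_notMem] with p hp
  by_cases hpG : p ∈ rootPrimes F.integralNormalization
  · have hpF := (rootPrimes_integralNormalization_subset hF hpG).resolve_right hp
    rw [indicator_of_mem hpG, indicator_of_mem hpG, indicator_of_mem hpF]
  · rw [indicator_of_notMem hpG, indicator_of_notMem hpG]

theorem finite_setOf_natCast_eval_eq {R : Type*} [CommRing R] [IsDomain R] [CharZero R]
    {F : R[X]} (hF : 0 < F.natDegree) (c : R) : {k : ℕ | F.eval (k : R) = c}.Finite := by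
  have hFc : F - C c ≠ 0 := ne_zero_of_natDegree_gt (by rwa [natDegree_sub_C])
  refine ((finite_setOfPred_isRoot hFc).preimage Nat.cast_injective.injOn).subset fun k hk => ?_
  rw [mem_preimage, mem_ofPred_eq, IsRoot.def, eval_sub, eval_C, sub_eq_zero]
  exact hk

theorem finite_prime_eval_of_mod_eq_root {F : ℤ[X]} (hF : 0 < F.natDegree) {p : ℕ} (hp : p.Prime)
    {a : ZMod p} (ha : aeval a F = 0) :
    {k : ℕ | Prime (F.eval (k : ℤ)) ∧ (k : ZMod p) = a}.Finite := by
  refine ((finite_setOf_natCast_eval_eq hF (p : ℤ)).union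
    (finite_setOf_natCast_eval_eq hF (-p : ℤ))).subset ?_
  rintro k ⟨hk, rfl⟩
  have hdvd : (p : ℤ) ∣ F.eval (k : ℤ) := by
    rw [← ZMod.intCast_zmod_eq_zero_iff_dvd, ← ha, ← Int.cast_natCast (R := ZMod p) k]
    exact (aeval_algebraMap_apply_eq_algebraMap_eval (k : ℤ) F).symm
  rw [(Nat.prime_iff_prime_int.1 hp).dvd_prime_iff_associated hk, Int.associated_iff] at hdvd
  exact hdvd.imp Eq.symm Int.eq_neg_comm.1

end RootPrimes

namespace IsUpperQuasiDensity

variable {μ : Set ℕ → ℝ} (hμ : IsUpperQuasiDensity μ)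

include hμ

theorem le_one (X : Set ℕ) : μ X ≤ 1 := hμ.2.1 X

theorem union_le (X Y : Set ℕ) : μ (X ∪ Y) ≤ μ X + μ Y := hμ.2.2.1 X Y

theorem image_mul_left {k : ℕ} (hk : 0 < k) (X : Set ℕ) : μ ((k * ·) '' X) = μ X / k :=
  hμ.2.2.2.1 X k hk

theorem image_add_right (h : ℕ) (X : Set ℕ) : μ ((· + h) '' X) = μ X := hμ.2.2.2.2 X h

theorem nonneg (X : Set ℕ) : 0 ≤ μ X := by
  have := hμ.union_le X X
  rw [union_self] at this
  linarith

theorem eq_zero_of_image_two_mul_eq_self {X : Set ℕ} (hX : (2 * ·) '' X = X) : μ X = 0 := by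
  have := hμ.image_mul_left two_pos X
  rw [hX] at this
  push_cast at this
  linarith

theorem eq_zero_of_finite {X : Set ℕ} (hX : X.Finite) : μ X = 0 := by
  induction X, hX using Finite.induction_on with
  | empty => exact hμ.eq_zero_of_image_two_mul_eq_self (image_empty _)
  | @insert a X _ _ ih =>
    have hzero : μ {0} = 0 := hμ.eq_zero_of_image_two_mul_eq_self image_singleton
    have hsingleton : μ {a} = 0 := by
      simpa only [image_singleton, zero_add, hzero] using hμ.image_add_right a {0}
    refine le_antisymm ?_ (hμ.nonneg _)
    rw [insert_eq]
    exact (hμ.union_le {a} X).trans_eq (by rw [hsingleton, ih, add_zero])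

theorem le_sdiff_of_finite {X E : Set ℕ} (hXE : (X ∩ E).Finite) : μ X ≤ μ (X \ E) := by
  simpa only [inter_union_sdiff, hμ.eq_zero_of_finite hXE, zero_add]
    using hμ.union_le (X ∩ E) (X \ E)

theorem biUnion_finset_le {ι : Type*} (s : Finset ι) (X : ι → Set ℕ) :
    μ (⋃ i ∈ s, X i) ≤ ∑ i ∈ s, μ (X i) := by
  classical
  induction s using Finset.induction_on with
  | empty => simp [hμ.eq_zero_of_finite finite_empty]
  | insert a s ha ih =>
    rw [Finset.set_biUnion_insert, Finset.sum_insert ha]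
    exact (hμ.union_le _ _).trans (add_le_add_right ih _)

theorem le_of_forall_section_le {k : ℕ} [NeZero k] {X : Set ℕ} {a : ZMod k}
    (ha : ∀ x ∈ X, (x : ZMod k) ≠ a) {c : ℝ} (hc : ∀ h, μ {m | k * m + h ∈ X} ≤ c) :
    μ X ≤ (1 - (k : ℝ)⁻¹) * c := by
  have hk : 0 < k := Nat.pos_of_neZero k
  let piece (h : ℕ) : Set ℕ := (· + h) '' ((k * ·) '' {m | k * m + h ∈ X})
  have hpiece (h : ℕ) : μ (piece h) ≤ c / k := by
    rw [hμ.image_add_right, hμ.image_mul_left hk]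
    gcongr
    exact hc h
  have hX : X = ⋃ h ∈ (Finset.range k).erase a.val, piece h := by
    refine Subset.antisymm (fun x hx => ?_) (iUnion₂_subset ?_)
    · have hmod : x % k ∈ (Finset.range k).erase a.val := by
        refine Finset.mem_erase.2 ⟨fun h => ha x hx ?_, Finset.mem_range.2 (x.mod_lt hk)⟩
        rw [← ZMod.natCast_zmod_val a, ← h, ZMod.natCast_mod]
      refine mem_iUnion₂.2 ⟨x % k, hmod, k * (x / k), ⟨x / k, ?_, rfl⟩, x.div_add_mod k⟩
      rwa [mem_ofPred_eq, x.div_add_mod k]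
    · rintro h - _ ⟨_, ⟨m, hm, rfl⟩, rfl⟩
      exact hm
  calc μ X = μ (⋃ h ∈ (Finset.range k).erase a.val, piece h) := congrArg μ hX
    _ ≤ ∑ h ∈ (Finset.range k).erase a.val, μ (piece h) := hμ.biUnion_finset_le _ piece
    _ ≤ ((Finset.range k).erase a.val).card • (c / k) :=
      Finset.sum_le_card_nsmul _ _ _ fun h _ => hpiece h
    _ = (1 - (k : ℝ)⁻¹) * c := by
      rw [Finset.card_erase_of_mem (Finset.mem_range.2 a.val_lt), Finset.card_range,
        nsmul_eq_mul, Nat.cast_pred hk]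
      field_simp

theorem le_prod_one_sub_inv {ι : Type*} {S : Finset ι} {n : ι → ℕ} (hpos : ∀ i ∈ S, 0 < n i)
    (hcoprime : (S : Set ι).Pairwise fun i j => (n i).Coprime (n j)) {X : Set ℕ}
    (hX : ∀ i ∈ S, ∃ a : ZMod (n i), ∀ x ∈ X, (x : ZMod (n i)) ≠ a) :
    μ X ≤ ∏ i ∈ S, (1 - (n i : ℝ)⁻¹) := by
  classical
  induction S using Finset.induction_on generalizing X with
  | empty => simpa only [Finset.prod_empty] using hμ.le_one X
  | insert i S hiS ih =>
    rw [Finset.forall_mem_insert] at hpos hX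
    obtain ⟨⟨a, ha⟩, hXS⟩ := hX
    have : NeZero (n i) := ⟨hpos.1.ne'⟩
    rw [Finset.prod_insert hiS]
    refine hμ.le_of_forall_section_le ha fun h => ?_
    refine ih hpos.2 (hcoprime.mono (by simp)) fun j hj => ?_
    obtain ⟨b, hb⟩ := hXS j hj
    have hinv : (n i : ZMod (n j)) * (n i : ZMod (n j))⁻¹ = 1 :=
      ZMod.coe_mul_inv_eq_one _ <| hcoprime (Finset.mem_insert_self i S)
        (Finset.mem_insert_of_mem hj) (ne_of_mem_of_not_mem hj hiS).symm
    refine ⟨(n i : ZMod (n j))⁻¹ * (b - h), fun m hm hmb => hb _ hm ?_⟩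
    rw [Nat.cast_add, Nat.cast_mul, hmb, ← mul_assoc, hinv, one_mul, sub_add_cancel]

end IsUpperQuasiDensity

theorem smallSet_of_finite_residue {ι : Type*} {n : ι → ℕ} (hpos : ∀ i, 0 < n i)
    (hcoprime : Pairwise fun i j => (n i).Coprime (n j))
    (hdiv : ¬ Summable fun i => (n i : ℝ)⁻¹) {X : Set ℕ}
    (hX : ∀ i, ∃ a : ZMod (n i), {x ∈ X | (x : ZMod (n i)) = a}.Finite) : SmallSet X := by
  intro μ hμ
  choose a ha using hX
  have hle (S : Finset ι) : μ X ≤ Real.exp (-∑ i ∈ S, (n i : ℝ)⁻¹) := by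
    let E : Set ℕ := ⋃ i ∈ S, {x ∈ X | (x : ZMod (n i)) = a i}
    have hE : E.Finite := S.finite_toSet.biUnion fun i _ => ha i
    have havoid (i : ι) (hi : i ∈ S) (x : ℕ) (hx : x ∈ X \ E) : (x : ZMod (n i)) ≠ a i :=
      fun hxa => hx.2 (mem_biUnion hi ⟨hx.1, hxa⟩)
    calc μ X ≤ μ (X \ E) := hμ.le_sdiff_of_finite (hE.inter_of_right X)
      _ ≤ ∏ i ∈ S, (1 - (n i : ℝ)⁻¹) := hμ.le_prod_one_sub_inv (fun i _ => hpos i)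
        (hcoprime.set_pairwise _) fun i hi => ⟨a i, havoid i hi⟩
      _ ≤ ∏ i ∈ S, Real.exp (-(n i : ℝ)⁻¹) := Finset.prod_le_prod
        (fun i _ => sub_nonneg.2 (Nat.cast_inv_le_one (n i)))
        fun i _ => Real.one_sub_le_exp_neg _
      _ = Real.exp (-∑ i ∈ S, (n i : ℝ)⁻¹) := by rw [← Real.exp_sum, Finset.sum_neg_distrib]
  by_contra hne
  have hμX : 0 < μ X := (hμ.nonneg X).lt_of_ne' hne
  refine hdiv <| summable_of_sum_le (c := -Real.log (μ X))
    (fun i => inv_nonneg.2 (n i).cast_nonneg) fun S => ?_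
  have hlog := (Real.log_le_iff_le_exp hμX).2 (hle S)
  linarith

/-- For a non-constant polynomial F with integer coefficients, the set of
k ∈ ℕ such that F(k) is a prime of ℤ is small. -/
theorem smallSet_polynomial_prime_preimage (F : Polynomial ℤ)
    (hF : 0 < F.natDegree) :
    SmallSet {k : ℕ | Prime (Polynomial.eval (k : ℤ) F)} := by
  have hpos (p : rootPrimes F) : 0 < (p : ℕ) := p.2.1.pos
  have hcoprime : Pairwise fun p q : rootPrimes F => (p : ℕ).Coprime q := fun p q hpq =>
    (Nat.coprime_primes p.2.1 q.2.1).2 (Subtype.coe_ne_coe.2 hpq)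
  refine smallSet_of_finite_residue hpos hcoprime (not_summable_inv_rootPrimes hF) fun p => ?_
  obtain ⟨hp, a, ha⟩ := p.2
  exact ⟨a, finite_prime_eval_of_mod_eq_root hF hp ha⟩
end

section
/- Let a, b, c ∈ ℕ with a c ≠ 0 and suppose b² − 4ac = q² for some positive integer q. Set X := { a x² + b x y + c y² : x, y ∈ ℕ }. Then the upper asymptotic density of X is zero, d*(X) = 0, while the upper Buck density of X satisfies 𝔟*(X) ≥ 1/(4 a q) > 0. -/
open Set Filter Topology

open scoped Finset

/-! The form factors over `ℤ`: with `b = q + e` one has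
`4a(ax² + bxy + cy²) = (2ax + ey)(2ax + (e + 2q)y)`.

Density zero: the multiples by `4a` of the values up to `n` are entries of a multiplication table of
size `O(√n)`, so Erdős' multiplication table theorem applies. It follows from Turán's inequality:
for a finite set `P` of primes with large reciprocal sum `E`, most `n` have about `E` divisors
in `P`, whereas most products `uv` have about `2E` of them.

Buck density: the substitution `x = 1 - et`, `y = 2at` turns the two factors into `2a` and
`2a(1 + 2qt)`, hence the form into `a + 2aqt`. Although `1 - et` may be negative, it is congruent
to a natural number modulo any `k > 0`, so the values meet every residue class that the progression
`2aqℕ + a` meets, and a finite union of progressions covering the values contains almost all of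
`2aqℕ + a`. -/

/-! ### Turán's inequality -/

/-- `ω_P(n)`: how many elements of `P` divide `n`. -/
def divisorCount (P : Finset ℕ) (n : ℕ) : ℕ := #{p ∈ P | p ∣ n}

/-- `∑_{p ∈ P} 1/p`, the approximate mean of `divisorCount P` on long intervals. -/
noncomputable def recipSum (P : Finset ℕ) : ℝ := ∑ p ∈ P, 1 / (p : ℝ)

lemma recipSum_nonneg (P : Finset ℕ) : 0 ≤ recipSum P :=
  Finset.sum_nonneg fun _ _ => by positivity

lemma sum_divisorCount (P : Finset ℕ) (M : ℕ) :
    ∑ n ∈ Finset.Ioc 0 M, divisorCount P n = ∑ p ∈ P, M / p := by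
  calc ∑ n ∈ Finset.Ioc 0 M, divisorCount P n = ∑ p ∈ P, #{n ∈ Finset.Ioc 0 M | p ∣ n} :=
        Finset.sum_card_bipartiteAbove_eq_sum_card_bipartiteBelow fun n p => p ∣ n
    _ = ∑ p ∈ P, M / p := by simp only [Nat.Ioc_filter_dvd_card_eq_div]

lemma sum_divisorCount_sq (P : Finset ℕ) (M : ℕ) :
    ∑ n ∈ Finset.Ioc 0 M, divisorCount P n ^ 2 = ∑ p ∈ P, ∑ r ∈ P, M / p.lcm r := by
  calc ∑ n ∈ Finset.Ioc 0 M, divisorCount P n ^ 2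
      = ∑ n ∈ Finset.Ioc 0 M, #{z ∈ P ×ˢ P | z.1.lcm z.2 ∣ n} := by
        simp only [divisorCount, sq, ← Finset.card_product, ← Finset.filter_product,
          Nat.lcm_dvd_iff]
    _ = ∑ z ∈ P ×ˢ P, #{n ∈ Finset.Ioc 0 M | z.1.lcm z.2 ∣ n} :=
        Finset.sum_card_bipartiteAbove_eq_sum_card_bipartiteBelow
          fun n (z : ℕ × ℕ) => z.1.lcm z.2 ∣ n
    _ = ∑ p ∈ P, ∑ r ∈ P, M / p.lcm r := by
        simp only [Nat.Ioc_filter_dvd_card_eq_div, Finset.sum_product]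

lemma le_sum_divisorCount {P : Finset ℕ} (hP : ∀ p ∈ P, 0 < p) (M : ℕ) :
    M * recipSum P - #P ≤ ∑ n ∈ Finset.Ioc 0 M, (divisorCount P n : ℝ) := by
  rw [← Nat.cast_sum, sum_divisorCount, recipSum, Finset.mul_sum, Finset.card_eq_sum_ones]
  push_cast
  rw [← Finset.sum_sub_distrib]
  refine Finset.sum_le_sum fun p hp => ?_
  have hlt : (M : ℝ) < (M / p : ℕ) * p + p := by exact_mod_cast Nat.lt_div_mul_add (hP p hp)
  have hp0 : (0 : ℝ) < p := by exact_mod_cast hP p hp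
  rw [mul_one_div, sub_le_iff_le_add, div_le_iff₀ hp0]
  linarith

lemma sum_divisorCount_sq_le {P : Finset ℕ} (hP : ∀ p ∈ P, p.Prime) (M : ℕ) :
    ∑ n ∈ Finset.Ioc 0 M, (divisorCount P n : ℝ) ^ 2 ≤ M * recipSum P ^ 2 + M * recipSum P := by
  have div_lcm_le : ∀ p ∈ P, ∀ r ∈ P, ((M / p.lcm r : ℕ) : ℝ) ≤
      M * (1 / p * (1 / r)) + if p = r then M * (1 / (p : ℝ)) else 0 := by
    intro p hp r hr
    refine Nat.cast_div_le.trans ?_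
    split_ifs with hpr
    · subst hpr
      rw [Nat.lcm_self, mul_one_div (M : ℝ)]
      exact le_add_of_nonneg_left (by positivity)
    · rw [((Nat.coprime_primes (hP p hp) (hP r hr)).2 hpr).lcm_eq_mul, Nat.cast_mul,
        one_div_mul_one_div, mul_one_div, add_zero]
  calc ∑ n ∈ Finset.Ioc 0 M, (divisorCount P n : ℝ) ^ 2
      = ∑ p ∈ P, ∑ r ∈ P, ((M / p.lcm r : ℕ) : ℝ) := by exact_mod_cast sum_divisorCount_sq P M
    _ ≤ ∑ p ∈ P, ∑ r ∈ P, (M * (1 / p * (1 / r)) + if p = r then M * (1 / (p : ℝ)) else 0) :=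
        Finset.sum_le_sum fun p hp => Finset.sum_le_sum (div_lcm_le p hp)
    _ = M * recipSum P ^ 2 + M * recipSum P := by
        have square : ∑ p ∈ P, ∑ r ∈ P, M * (1 / (p : ℝ) * (1 / r)) = M * recipSum P ^ 2 := by
          simp only [recipSum, sq, Finset.sum_mul_sum, ← Finset.mul_sum]
        have diagonal : ∑ p ∈ P, (if p ∈ P then M * (1 / (p : ℝ)) else 0) = M * recipSum P := by
          rw [recipSum, Finset.mul_sum, Finset.sum_ite_mem, Finset.inter_self]
        simp only [Finset.sum_add_distrib, Finset.sum_ite_eq, square, diagonal]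

lemma sum_divisorCount_sub_sq_le {P : Finset ℕ} (hP : ∀ p ∈ P, p.Prime) {M : ℕ}
    (hM : 2 * #P ≤ M) :
    ∑ n ∈ Finset.Ioc 0 M, (divisorCount P n - recipSum P) ^ 2 ≤ 2 * M * recipSum P := by
  have expand : ∑ n ∈ Finset.Ioc 0 M, (divisorCount P n - recipSum P) ^ 2 =
      ∑ n ∈ Finset.Ioc 0 M, (divisorCount P n : ℝ) ^ 2
        - 2 * recipSum P * ∑ n ∈ Finset.Ioc 0 M, (divisorCount P n : ℝ) + M * recipSum P ^ 2 := by
    simp only [sub_sq, Finset.sum_add_distrib, Finset.sum_sub_distrib, Finset.mul_sum,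
      Finset.sum_const, Nat.card_Ioc, tsub_zero, nsmul_eq_mul]
    simp only [mul_right_comm]
  have first := mul_le_mul_of_nonneg_left (le_sum_divisorCount (fun p hp => (hP p hp).pos) M)
    (recipSum_nonneg P)
  have second := sum_divisorCount_sq_le hP M
  have hM' : 2 * (#P : ℝ) ≤ M := by exact_mod_cast hM
  have error := mul_le_mul_of_nonneg_left hM' (recipSum_nonneg P)
  rw [expand]
  linarith

/-- The `n ≤ M` for which `divisorCount P n` is at distance at least `t` from `recipSum P`. -/
noncomputable def deviants (P : Finset ℕ) (M : ℕ) (t : ℝ) : Finset ℕ :=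
  {n ∈ Finset.Ioc 0 M | t ≤ |divisorCount P n - recipSum P|}

lemma card_deviants_mul_sq_le {P : Finset ℕ} (hP : ∀ p ∈ P, p.Prime) {M : ℕ} (hM : 2 * #P ≤ M)
    {t : ℝ} (ht : 0 ≤ t) : #(deviants P M t) * t ^ 2 ≤ 2 * M * recipSum P := by
  calc #(deviants P M t) * t ^ 2
      ≤ ∑ n ∈ deviants P M t, (divisorCount P n - recipSum P) ^ 2 := by
        rw [← nsmul_eq_mul]
        refine Finset.card_nsmul_le_sum _ _ _ fun n hn => ?_
        rw [← sq_abs (_ - _)]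
        exact pow_le_pow_left₀ ht (Finset.mem_filter.1 hn).2 2
    _ ≤ ∑ n ∈ Finset.Ioc 0 M, (divisorCount P n - recipSum P) ^ 2 :=
        Finset.sum_le_sum_of_subset_of_nonneg (Finset.filter_subset _ _) fun _ _ _ => sq_nonneg _
    _ ≤ 2 * M * recipSum P := sum_divisorCount_sub_sq_le hP hM

/-! ### Erdős' multiplication table theorem -/

lemma divisorCount_mul_add_divisorCount_gcd {P : Finset ℕ} (hP : ∀ p ∈ P, p.Prime) (u v : ℕ) :
    divisorCount P (u * v) + divisorCount P (u.gcd v) = divisorCount P u + divisorCount P v := by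
  have dvd_mul : {p ∈ P | p ∣ u * v} = {p ∈ P | p ∣ u ∨ p ∣ v} :=
    Finset.filter_congr fun p hp => (hP p hp).dvd_mul
  simp only [divisorCount, dvd_mul, Nat.dvd_gcd_iff, Finset.filter_or, Finset.filter_and,
    Finset.card_union_add_card_inter]

lemma sum_divisorCount_gcd (P : Finset ℕ) (M : ℕ) :
    ∑ z ∈ Finset.Ioc 0 M ×ˢ Finset.Ioc 0 M, divisorCount P (z.1.gcd z.2) =
      ∑ p ∈ P, (M / p) ^ 2 := by
  calc ∑ z ∈ Finset.Ioc 0 M ×ˢ Finset.Ioc 0 M, divisorCount P (z.1.gcd z.2)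
      = ∑ p ∈ P, #{z ∈ Finset.Ioc 0 M ×ˢ Finset.Ioc 0 M | p ∣ z.1.gcd z.2} :=
        Finset.sum_card_bipartiteAbove_eq_sum_card_bipartiteBelow
          fun (z : ℕ × ℕ) p => p ∣ z.1.gcd z.2
    _ = ∑ p ∈ P, (M / p) ^ 2 := by
        simp only [Nat.dvd_gcd_iff, Finset.filter_product, Finset.card_product,
          Nat.Ioc_filter_dvd_card_eq_div, sq]

lemma sum_one_div_sq_le_two (P : Finset ℕ) : ∑ p ∈ P, 1 / (p : ℝ) ^ 2 ≤ 2 := by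
  have basel := sum_le_hasSum P (fun _ _ => by positivity) hasSum_zeta_two
  nlinarith [Real.pi_pos, Real.pi_lt_d2]

lemma sum_divisorCount_gcd_le (P : Finset ℕ) (M : ℕ) :
    ∑ z ∈ Finset.Ioc 0 M ×ˢ Finset.Ioc 0 M, (divisorCount P (z.1.gcd z.2) : ℝ) ≤ 2 * M ^ 2 := by
  calc ∑ z ∈ Finset.Ioc 0 M ×ˢ Finset.Ioc 0 M, (divisorCount P (z.1.gcd z.2) : ℝ)
      = ∑ p ∈ P, ((M / p : ℕ) : ℝ) ^ 2 := by exact_mod_cast sum_divisorCount_gcd P M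
    _ ≤ ∑ p ∈ P, ((M : ℝ) / p) ^ 2 := by gcongr; exact Nat.cast_div_le
    _ = (∑ p ∈ P, 1 / (p : ℝ) ^ 2) * M ^ 2 := by
        rw [Finset.sum_mul]
        exact Finset.sum_congr rfl fun p _ => by ring
    _ ≤ 2 * M ^ 2 := by gcongr; exact sum_one_div_sq_le_two P

/-- The pairs in `[1, M]²` having at least `t` common divisors in `P`. -/
noncomputable def gcdRichPairs (P : Finset ℕ) (M : ℕ) (t : ℝ) : Finset (ℕ × ℕ) :=
  {z ∈ Finset.Ioc 0 M ×ˢ Finset.Ioc 0 M | t ≤ divisorCount P (z.1.gcd z.2)}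

lemma card_gcdRichPairs_mul_le (P : Finset ℕ) (M : ℕ) (t : ℝ) :
    #(gcdRichPairs P M t) * t ≤ 2 * M ^ 2 := by
  calc #(gcdRichPairs P M t) * t
      ≤ ∑ z ∈ gcdRichPairs P M t, (divisorCount P (z.1.gcd z.2) : ℝ) := by
        rw [← nsmul_eq_mul]
        exact Finset.card_nsmul_le_sum _ _ _ fun z hz => (Finset.mem_filter.1 hz).2
    _ ≤ ∑ z ∈ Finset.Ioc 0 M ×ˢ Finset.Ioc 0 M, (divisorCount P (z.1.gcd z.2) : ℝ) :=
        Finset.sum_le_sum_of_subset_of_nonneg (Finset.filter_subset _ _) fun _ _ _ => by positivity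
    _ ≤ 2 * M ^ 2 := sum_divisorCount_gcd_le P M

/-- The set of entries of the `M × M` multiplication table. -/
def mulTable (M : ℕ) : Finset ℕ :=
  (Finset.Ioc 0 M ×ˢ Finset.Ioc 0 M).image fun z => z.1 * z.2

lemma mul_mem_mulTable {M u v : ℕ} (huv : 0 < u * v) (hu : u ≤ M) (hv : v ≤ M) :
    u * v ∈ mulTable M :=
  Finset.mem_image_of_mem (fun z : ℕ × ℕ => z.1 * z.2) <| Finset.mk_mem_product
    (Finset.mem_Ioc.2 ⟨Nat.pos_of_mul_pos_right huv, hu⟩)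
    (Finset.mem_Ioc.2 ⟨Nat.pos_of_mul_pos_left huv, hv⟩)

lemma mulTable_mono : Monotone mulTable := fun _ _ h =>
  Finset.image_subset_image <| Finset.product_subset_product
    (Finset.Ioc_subset_Ioc_right h) (Finset.Ioc_subset_Ioc_right h)

lemma mulTable_subset {P : Finset ℕ} (hP : ∀ p ∈ P, p.Prime) (M : ℕ) :
    mulTable M ⊆ deviants P (M ^ 2) (recipSum P / 2) ∪
      (deviants P M (recipSum P / 8) ×ˢ Finset.Ioc 0 M ∪
        Finset.Ioc 0 M ×ˢ deviants P M (recipSum P / 8) ∪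
        gcdRichPairs P M (recipSum P / 4)).image fun z => z.1 * z.2 := by
  intro m hm
  obtain ⟨⟨u, v⟩, huv, rfl⟩ := Finset.mem_image.1 hm
  obtain ⟨hu, hv⟩ := Finset.mem_product.1 huv
  by_contra hmem
  simp only [Finset.mem_union, not_or] at hmem
  obtain ⟨huv_typical, hnot_image⟩ := hmem
  have hnot_bad : (u, v) ∉ _ := fun hbad => hnot_image (Finset.mem_image.2 ⟨(u, v), hbad, rfl⟩)
  simp only [Finset.mem_union, Finset.mem_product, deviants, gcdRichPairs, Finset.mem_filter, hu,
    hv, true_and, and_true, not_or, not_le, abs_lt] at hnot_bad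
  obtain ⟨⟨hu_typical, hv_typical⟩, hgcd⟩ := hnot_bad
  have hcount : (divisorCount P (u * v) : ℝ) + divisorCount P (u.gcd v) =
      divisorCount P u + divisorCount P v := by
    exact_mod_cast divisorCount_mul_add_divisorCount_gcd hP u v
  refine huv_typical (Finset.mem_filter.2 ⟨?_, le_abs.2 (.inl (by linarith))⟩)
  rw [Finset.mem_Ioc] at hu hv ⊢
  exact ⟨Nat.mul_pos hu.1 hv.1, sq M ▸ Nat.mul_le_mul hu.2 hv.2⟩

lemma card_mulTable_le {P : Finset ℕ} (hP : ∀ p ∈ P, p.Prime) (M : ℕ) :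
    #(mulTable M) ≤ #(deviants P (M ^ 2) (recipSum P / 2)) +
      2 * M * #(deviants P M (recipSum P / 8)) + #(gcdRichPairs P M (recipSum P / 4)) := by
  refine (Finset.card_le_card (mulTable_subset hP M)).trans ((Finset.card_union_le _ _).trans ?_)
  rw [add_assoc]
  gcongr
  refine Finset.card_image_le.trans ((Finset.card_union_le _ _).trans ?_)
  gcongr
  refine (Finset.card_union_le _ _).trans_eq ?_
  simp only [Finset.card_product, Nat.card_Ioc, tsub_zero]
  ring

lemma card_mulTable_mul_recipSum_le {P : Finset ℕ} (hP : ∀ p ∈ P, p.Prime) (hE : 0 < recipSum P)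
    {M : ℕ} (hM : 2 * #P ≤ M) : #(mulTable M) * recipSum P ≤ 272 * (M : ℝ) ^ 2 := by
  set E := recipSum P
  have products : #(deviants P (M ^ 2) (E / 2)) * E ≤ 8 * (M : ℝ) ^ 2 := by
    have := card_deviants_mul_sq_le hP (hM.trans (Nat.le_self_pow two_ne_zero M))
      (half_pos hE).le
    push_cast at this
    exact le_of_mul_le_mul_right (by linarith) hE
  have factors : #(deviants P M (E / 8)) * E ≤ 128 * M := by
    have := card_deviants_mul_sq_le hP hM (t := E / 8) (by positivity)
    exact le_of_mul_le_mul_right (by linarith) hE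
  have gcds := card_gcdRichPairs_mul_le P M (E / 4)
  calc #(mulTable M) * E
      ≤ (#(deviants P (M ^ 2) (E / 2)) + 2 * M * #(deviants P M (E / 8)) +
          #(gcdRichPairs P M (E / 4))) * E := by
        gcongr
        exact_mod_cast card_mulTable_le hP M
    _ = #(deviants P (M ^ 2) (E / 2)) * E + 2 * M * (#(deviants P M (E / 8)) * E) +
          4 * (#(gcdRichPairs P M (E / 4)) * (E / 4)) := by ring
    _ ≤ 8 * M ^ 2 + 2 * M * (128 * M) + 4 * (2 * M ^ 2) := by gcongr
    _ = 272 * M ^ 2 := by ring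

lemma exists_primes_le_recipSum (R : ℝ) :
    ∃ P : Finset ℕ, (∀ p ∈ P, p.Prime) ∧ R ≤ recipSum P := by
  by_contra! bounded
  refine not_summable_one_div_on_primes (summable_of_sum_le (c := R)
    (Set.indicator_nonneg fun _ _ => by positivity) fun s => ?_)
  rw [Finset.sum_indicator_eq_sum_filter]
  exact (bounded {p ∈ s | p.Prime} fun p hp => (Finset.mem_filter.1 hp).2).le

theorem isLittleO_card_mulTable :
    (fun M => (#(mulTable M) : ℝ)) =o[atTop] fun M => (M : ℝ) ^ 2 := by
  refine Asymptotics.isLittleO_iff.2 fun ε hε => ?_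
  obtain ⟨P, hP, hPε⟩ := exists_primes_le_recipSum (272 / ε)
  have hE : 0 < recipSum P := lt_of_lt_of_le (by positivity) hPε
  filter_upwards [eventually_ge_atTop (2 * #P)] with M hM
  rw [Real.norm_natCast, Real.norm_of_nonneg (by positivity)]
  rw [div_le_iff₀' hε] at hPε
  refine le_of_mul_le_mul_right ?_ hE
  calc #(mulTable M) * recipSum P ≤ 272 * (M : ℝ) ^ 2 := card_mulTable_mul_recipSum_le hP hE hM
    _ ≤ ε * recipSum P * M ^ 2 := by gcongr
    _ = ε * M ^ 2 * recipSum P := by ring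

/-! ### Upper asymptotic density -/

lemma ncard_inter_Icc_div_le_one (X : Set ℕ) (n : ℕ) : ((X ∩ Set.Icc 1 n).ncard : ℝ) / n ≤ 1 := by
  refine div_le_one_of_le₀ ?_ n.cast_nonneg
  have hle : (X ∩ Set.Icc 1 n).ncard ≤ (Set.Icc 1 n).ncard :=
    Set.ncard_le_ncard Set.inter_subset_right
  simpa [Set.ncard_eq_toFinset_card'] using hle

lemma isBoundedUnder_le_ncard_inter_Icc_div (X : Set ℕ) :
    IsBoundedUnder (· ≤ ·) atTop fun n : ℕ => ((X ∩ Set.Icc 1 n).ncard : ℝ) / n :=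
  isBoundedUnder_of ⟨1, ncard_inter_Icc_div_le_one X⟩

lemma isBoundedUnder_ge_ncard_inter_Icc_div (X : Set ℕ) :
    IsBoundedUnder (· ≥ ·) atTop fun n : ℕ => ((X ∩ Set.Icc 1 n).ncard : ℝ) / n :=
  isBoundedUnder_of ⟨0, fun _ => by positivity⟩

lemma upperAsymptoticDensity_le_of_finite_diff {X Y : Set ℕ} (h : (X \ Y).Finite) :
    upperAsymptoticDensity X ≤ upperAsymptoticDensity Y := by
  set err : ℕ → ℝ := fun n => ((X \ Y).ncard : ℝ) / n
  have err_tendsto : Tendsto err atTop (𝓝 0) := tendsto_const_div_atTop_nhds_zero_nat _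
  have count_le (n : ℕ) : ((X ∩ Set.Icc 1 n).ncard : ℝ) / n ≤
      ((Y ∩ Set.Icc 1 n).ncard : ℝ) / n + err n := by
    have hsub : X ∩ Set.Icc 1 n ⊆ Y ∩ Set.Icc 1 n ∪ X \ Y := fun m hm => by
      by_cases hmY : m ∈ Y
      exacts [.inl ⟨hmY, hm.2⟩, .inr ⟨hm.1, hmY⟩]
    have hfin : (Y ∩ Set.Icc 1 n ∪ X \ Y).Finite :=
      ((Set.finite_Icc 1 n).subset Set.inter_subset_right).union h
    rw [← add_div]
    gcongr
    exact_mod_cast (Set.ncard_le_ncard hsub hfin).trans (Set.ncard_union_le _ _)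
  have hY_ge := isBoundedUnder_ge_ncard_inter_Icc_div Y
  have hY_le := isBoundedUnder_le_ncard_inter_Icc_div Y
  calc upperAsymptoticDensity X
      ≤ limsup ((fun n : ℕ => ((Y ∩ Set.Icc 1 n).ncard : ℝ) / n) + err) atTop :=
        limsup_le_limsup (.of_forall count_le)
          (isBoundedUnder_ge_ncard_inter_Icc_div X).isCoboundedUnder_le
          (isBoundedUnder_le_add hY_le err_tendsto.isBoundedUnder_le)
    _ ≤ upperAsymptoticDensity Y + limsup err atTop :=
        limsup_add_le hY_ge hY_le err_tendsto.isCoboundedUnder_le err_tendsto.isBoundedUnder_le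
    _ = upperAsymptoticDensity Y := by rw [err_tendsto.limsup_eq, add_zero]

lemma div_le_ncard_AP_inter_Icc {k : ℕ} (hk : 0 < k) (h n : ℕ) :
    (n - h) / k ≤ (AP k h ∩ Set.Icc 1 n).ncard := by
  have hle : (Set.Icc 1 ((n - h) / k)).ncard ≤ (AP k h ∩ Set.Icc 1 n).ncard := by
    refine Set.ncard_le_ncard_of_injOn (fun m => k * m + h) (fun m hm => ⟨⟨m, rfl⟩, ?_, ?_⟩)
      (fun m _ m' _ hmm' => Nat.eq_of_mul_eq_mul_left hk (Nat.add_right_cancel hmm'))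
      ((Set.finite_Icc 1 n).subset Set.inter_subset_right)
    · exact Nat.le_add_right_of_le (Nat.mul_pos hk hm.1)
    · have hkm : k * m ≤ n - h := (Nat.mul_le_mul_left k hm.2).trans (Nat.mul_div_le _ _)
      have hkm_pos : 0 < k * m := Nat.mul_pos hk hm.1
      change k * m + h ≤ n
      omega
  simpa [Set.ncard_eq_toFinset_card'] using hle

lemma one_div_le_upperAsymptoticDensity_AP {k : ℕ} (hk : 0 < k) (h : ℕ) :
    1 / (k : ℝ) ≤ upperAsymptoticDensity (AP k h) := by
  set lower : ℕ → ℝ := fun n => 1 / (k : ℝ) - (h / k + 1) / n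
  have lower_tendsto : Tendsto lower atTop (𝓝 (1 / (k : ℝ))) := by
    simpa [lower] using tendsto_const_nhds.sub
      (tendsto_const_div_atTop_nhds_zero_nat (h / k + 1 : ℝ))
  rw [← lower_tendsto.limsup_eq]
  refine limsup_le_limsup ?_ lower_tendsto.isCoboundedUnder_le
    (isBoundedUnder_le_ncard_inter_Icc_div _)
  filter_upwards [eventually_gt_atTop 0] with n hn
  have : (0 : ℝ) < n := by exact_mod_cast hn
  have hk0 : (0 : ℝ) < k := by exact_mod_cast hk
  have hcount : ((n - h) / k : ℝ) - 1 ≤ (AP k h ∩ Set.Icc 1 n).ncard := by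
    have hcard : (((n - h) / k : ℕ) : ℝ) ≤ (AP k h ∩ Set.Icc 1 n).ncard := by
      exact_mod_cast div_le_ncard_AP_inter_Icc hk h n
    have hfloor : ((n - h : ℕ) : ℝ) < ((n - h) / k : ℕ) * k + k := by
      exact_mod_cast Nat.lt_div_mul_add hk
    have hsub : (n : ℝ) ≤ (n - h : ℕ) + h := by exact_mod_cast le_tsub_add
    rw [sub_le_iff_le_add, div_le_iff₀ hk0]
    nlinarith
  calc lower n = ((n - h) / k - 1) / n := by simp only [lower]; field_simp; ring
    _ ≤ (AP k h ∩ Set.Icc 1 n).ncard / n := by gcongr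

theorem upperAsymptoticDensity_eq_zero_of_mul_mem_mulTable {X : Set ℕ} {d K : ℕ} (hd : 0 < d)
    (hK : 0 < K) (hX : ∀ m ∈ X, 0 < m → d * m ∈ mulTable (K * m.sqrt)) :
    upperAsymptoticDensity X = 0 := by
  have count_le (n : ℕ) : (X ∩ Set.Icc 1 n).ncard ≤ #(mulTable (K * n.sqrt)) := by
    rw [← Set.ncard_coe_finset]
    refine Set.ncard_le_ncard_of_injOn (d * ·) (fun m hm => ?_)
      (mul_right_injective₀ hd.ne').injOn (Finset.finite_toSet _)
    exact mulTable_mono (Nat.mul_le_mul_left K (Nat.sqrt_le_sqrt hm.2.2)) (hX m hm.1 hm.2.1)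
  have size_tendsto : Tendsto (fun n : ℕ => K * n.sqrt) atTop atTop :=
    (tendsto_atTop_atTop.2 fun N => ⟨N ^ 2, fun _ hn => Nat.le_sqrt'.2 hn⟩).const_mul_atTop' hK
  have size_sq : (fun n : ℕ => ((K * n.sqrt : ℕ) : ℝ) ^ 2) =O[atTop] fun n : ℕ => (n : ℝ) := by
    refine .of_bound ((K : ℝ) ^ 2) (.of_forall fun n => ?_)
    rw [Real.norm_of_nonneg (by positivity), Real.norm_natCast, Nat.cast_mul, mul_pow]
    gcongr
    exact_mod_cast n.sqrt_le'
  have count_isBigO : (fun n : ℕ => ((X ∩ Set.Icc 1 n).ncard : ℝ)) =O[atTop]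
      fun n : ℕ => (#(mulTable (K * n.sqrt)) : ℝ) := by
    refine .of_norm_le fun n => ?_
    rw [Real.norm_natCast]
    exact_mod_cast count_le n
  have table_isLittleO : (fun n : ℕ => (#(mulTable (K * n.sqrt)) : ℝ)) =o[atTop]
      fun n : ℕ => (n : ℝ) :=
    (isLittleO_card_mulTable.comp_tendsto size_tendsto).trans_isBigO size_sq
  exact (count_isBigO.trans_isLittleO table_isLittleO).tendsto_div_nhds_zero.limsup_eq

/-! ### Upper Buck density -/

lemma isFinUnionAP_univ : IsFinUnionAP Set.univ :=
  ⟨{(1, 0)}, by simp, by ext; simp [AP]⟩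

lemma IsFinUnionAP.exists_period {A : Set ℕ} (hA : IsFinUnionAP A) :
    ∃ k > 0, ∀ x ∈ A, ∀ j, x + k * j ∈ A := by
  obtain ⟨s, hs, rfl⟩ := hA
  refine ⟨∏ p ∈ s, p.1, Finset.prod_pos hs, fun x hx j => ?_⟩
  simp only [Set.mem_iUnion] at hx ⊢
  obtain ⟨p, hp, m, rfl⟩ := hx
  obtain ⟨w, hw⟩ : p.1 ∣ ∏ r ∈ s, r.1 := Finset.dvd_prod_of_mem _ hp
  exact ⟨p, hp, m + w * j, by rw [hw]; ring⟩

/-- The hypothesis `hYX` says that `Y` lies in the closure of `X` for the profinite topology. -/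
lemma IsFinUnionAP.finite_diff {A X Y : Set ℕ} (hA : IsFinUnionAP A) (hXA : X ⊆ A)
    (hYX : ∀ k > 0, ∀ y ∈ Y, ∃ x ∈ X, x ≡ y [MOD k]) : (Y \ A).Finite := by
  obtain ⟨k, hk, period⟩ := hA.exists_period
  have finite_residue_class (r : ℕ) : ({y ∈ Y \ A | y % k = r}).Finite := by
    obtain hempty | ⟨y₀, ⟨hy₀, -⟩, rfl⟩ := {y ∈ Y \ A | y % k = r}.eq_empty_or_nonempty
    · exact hempty ▸ Set.finite_empty
    obtain ⟨x, hx, hxy₀⟩ := hYX k hk y₀ hy₀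
    refine (Set.finite_Iio x).subset fun y ⟨⟨_, hyA⟩, hy⟩ => Set.mem_Iio.2 ?_
    by_contra! hxy
    obtain ⟨j, hj⟩ := (Nat.modEq_iff_dvd' hxy).1 (hxy₀.trans hy.symm)
    refine hyA ?_
    rw [← Nat.add_sub_of_le hxy, hj]
    exact period x (hXA hx) j
  refine ((Set.finite_Iio k).biUnion fun r _ => finite_residue_class r).subset fun y hy => ?_
  exact Set.mem_biUnion (Nat.mod_lt y hk) ⟨hy, rfl⟩

theorem upperAsymptoticDensity_le_buckDensity {X Y : Set ℕ}
    (hYX : ∀ k > 0, ∀ y ∈ Y, ∃ x ∈ X, x ≡ y [MOD k]) :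
    upperAsymptoticDensity Y ≤ buckDensity X := by
  refine le_csInf ⟨_, Set.univ, isFinUnionAP_univ, Set.subset_univ X, rfl⟩ ?_
  rintro _ ⟨A, hA, hXA, rfl⟩
  exact upperAsymptoticDensity_le_of_finite_diff (hA.finite_diff hXA hYX)

/-! ### Quadratic forms of square discriminant -/

/-- The set of values of `a x² + b x y + c y²` at natural `x`, `y`. -/
def formValues (a b c : ℕ) : Set ℕ :=
  {n : ℕ | ∃ x y : ℕ, n = a * x ^ 2 + b * x * y + c * y ^ 2}

lemma exists_eq_add_of_discrim_eq_sq {a b c q : ℕ}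
    (hD : (b : ℤ) ^ 2 - 4 * a * c = (q : ℤ) ^ 2) :
    ∃ e, b = q + e ∧ 4 * a * c = e * (e + 2 * q) := by
  have hb : b ^ 2 = q ^ 2 + 4 * a * c := by
    zify
    linarith
  obtain ⟨e, rfl⟩ : ∃ e, b = q + e :=
    Nat.exists_eq_add_of_le <| (Nat.pow_le_pow_iff_left two_ne_zero).1 (hb ▸ Nat.le_add_right _ _)
  exact ⟨e, rfl, by linarith⟩

section

variable {a c e q : ℕ}

lemma factor_mul_factor (he : 4 * a * c = e * (e + 2 * q)) (x y : ℕ) :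
    (2 * a * x + e * y) * (2 * a * x + (e + 2 * q) * y) =
      4 * a * (a * x ^ 2 + (q + e) * x * y + c * y ^ 2) := by
  linear_combination y ^ 2 * he.symm

lemma mul_mem_mulTable_of_mem_formValues (he : 4 * a * c = e * (e + 2 * q)) (ha : 0 < a)
    (hc : 0 < c) {m : ℕ} (hm0 : 0 < m) (hm : m ∈ formValues a (q + e) c) :
    4 * a * m ∈ mulTable ((2 * a + (e + 2 * q)) * m.sqrt) := by
  obtain ⟨x, y, hxy⟩ := hm
  have hx : x ≤ m.sqrt := Nat.le_sqrt'.2 <| by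
    calc x ^ 2 ≤ a * x ^ 2 := Nat.le_mul_of_pos_left _ ha
      _ ≤ m := by rw [hxy, add_assoc]; exact Nat.le_add_right _ _
  have hy : y ≤ m.sqrt := Nat.le_sqrt'.2 <| by
    calc y ^ 2 ≤ c * y ^ 2 := Nat.le_mul_of_pos_left _ hc
      _ ≤ m := hxy ▸ Nat.le_add_left _ _
  have hfactors := factor_mul_factor he x y
  rw [← hxy] at hfactors
  rw [← hfactors]
  refine mul_mem_mulTable (hfactors ▸ by positivity) ?_ ?_
  · calc 2 * a * x + e * y ≤ 2 * a * m.sqrt + (e + 2 * q) * m.sqrt := by gcongr; omega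
      _ = (2 * a + (e + 2 * q)) * m.sqrt := by ring
  · calc 2 * a * x + (e + 2 * q) * y ≤ 2 * a * m.sqrt + (e + 2 * q) * m.sqrt := by gcongr
      _ = (2 * a + (e + 2 * q)) * m.sqrt := by ring

lemma exists_mem_formValues_modEq (he : 4 * a * c = e * (e + 2 * q)) {k : ℕ} (hk : 0 < k)
    (t : ℕ) :
    ∃ n ∈ formValues a (q + e) c, n ≡ 2 * a * q * t + a [MOD k] := by
  have : NeZero k := ⟨hk.ne'⟩
  obtain ⟨x, hx⟩ : ∃ x : ℕ, (x : ZMod k) = 1 - e * t := ⟨_, ZMod.natCast_zmod_val _⟩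
  refine ⟨_, ⟨x, 2 * a * t, rfl⟩, (ZMod.natCast_eq_natCast_iff _ _ _).1 ?_⟩
  have he' : (4 * a * c : ZMod k) = e * (e + 2 * q) := by exact_mod_cast congrArg Nat.cast he
  push_cast
  rw [hx]
  linear_combination (a * t ^ 2 : ZMod k) * he'

end

theorem upperAsymptoticDensity_formValues_eq_zero {a b c q : ℕ} (ha : 0 < a) (hc : 0 < c)
    (hD : (b : ℤ) ^ 2 - 4 * a * c = (q : ℤ) ^ 2) :
    upperAsymptoticDensity (formValues a b c) = 0 := by
  obtain ⟨e, rfl, he⟩ := exists_eq_add_of_discrim_eq_sq hD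
  exact upperAsymptoticDensity_eq_zero_of_mul_mem_mulTable (by positivity) (by positivity)
    fun m hm hm0 => mul_mem_mulTable_of_mem_formValues he ha hc hm0 hm

theorem one_div_le_buckDensity_formValues {a b c q : ℕ} (ha : 0 < a) (hq : 0 < q)
    (hD : (b : ℤ) ^ 2 - 4 * a * c = (q : ℤ) ^ 2) :
    1 / (2 * a * q : ℝ) ≤ buckDensity (formValues a b c) := by
  obtain ⟨e, rfl, he⟩ := exists_eq_add_of_discrim_eq_sq hD
  calc 1 / (2 * a * q : ℝ) ≤ upperAsymptoticDensity (AP (2 * a * q) a) := by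
        exact_mod_cast one_div_le_upperAsymptoticDensity_AP (by positivity) a
    _ ≤ buckDensity (formValues a (q + e) c) :=
        upperAsymptoticDensity_le_buckDensity fun k hk _ ⟨t, ht⟩ =>
          ht ▸ exists_mem_formValues_modEq he hk t

theorem quadratic_form_asymptotic_zero_buck_pos_general (a b c q : ℕ) (hac : a * c ≠ 0)
    (hq : 0 < q) (hD : (b : ℤ) ^ 2 - 4 * a * c = (q : ℤ) ^ 2) :
    upperAsymptoticDensity {n : ℕ | ∃ x y : ℕ, n = a * x ^ 2 + b * x * y + c * y ^ 2} = 0 ∧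
    (1 : ℝ) / (2 * a * q) ≤
      buckDensity {n : ℕ | ∃ x y : ℕ, n = a * x ^ 2 + b * x * y + c * y ^ 2} := by
  have ha : 0 < a := Nat.pos_of_ne_zero (left_ne_zero_of_mul hac)
  have hc : 0 < c := Nat.pos_of_ne_zero (right_ne_zero_of_mul hac)
  exact ⟨upperAsymptoticDensity_formValues_eq_zero ha hc hD,
    one_div_le_buckDensity_formValues ha hq hD⟩

/-- If ac ≠ 0 and b² - 4ac = q² with q a positive integer, then the set X of
values of ax² + bxy + cy² over ℕ has upper asymptotic density zero, while its
upper Buck density is at least 1/(4aq) > 0. -/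
theorem quadratic_form_asymptotic_zero_buck_pos (a b c q : ℕ) (hac : a * c ≠ 0)
    (hq : 0 < q) (hD : (b : ℤ) ^ 2 - 4 * a * c = (q : ℤ) ^ 2) :
    upperAsymptoticDensity {n : ℕ | ∃ x y : ℕ, n = a * x ^ 2 + b * x * y + c * y ^ 2} = 0 ∧
    (1 : ℝ) / (4 * a * q) ≤
      buckDensity {n : ℕ | ∃ x y : ℕ, n = a * x ^ 2 + b * x * y + c * y ^ 2} ∧
    (0 : ℝ) < 1 / (4 * a * q) := by
  have ha : 0 < a := Nat.pos_of_ne_zero (left_ne_zero_of_mul hac)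
  obtain ⟨hzero, hbuck⟩ := quadratic_form_asymptotic_zero_buck_pos_general a b c q hac hq hD
  refine ⟨hzero, le_trans ?_ hbuck, by positivity⟩
  gcongr
  norm_num
end
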